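/- Let n ≥ 2, let Λ : ℕ → [0,1] be nonincreasing with Λ(0) = 1 and satisfying hypothesis H_Λ, and let μ be a probability measure on [0,1] satisfying hypothesis H_μ, and let m★ be the unique zero of the mean field h in F_n^+. Then m★ is an attracting equilibrium of the ODE dm/dt = −h(m) on F_n^+, and for any gain sequence (ε_t) in (0,1) with Σ_t ε_t = +∞ and Σ_t ε_t² < ∞, the SOM process m(t+1) = T_{ε_{t+1}}(m(t), X_{t+1}) with i.i.d. inputs X_t of law μ and initial condition m(0) ∈ F_n^+ converges to m★ almost surely. -/

import Mathlib

open MeasureTheory ProbabilityTheory Set Filter Topology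
open scoped Classical ENNReal

noncomputable section

/-- The winning unit: the smallest index `i` minimizing `|x - m i|`. -/
def winner {n : ℕ} [NeZero n] (m : Fin n → ℝ) (x : ℝ) : Fin n :=
  (Finset.univ.filter fun i : Fin n => ∀ j, |x - m i| ≤ |x - m j|).min'
    (by
      obtain ⟨i, -, hi⟩ := Finset.exists_min_image (Finset.univ : Finset (Fin n))
        (fun i => |x - m i|) ⟨0, Finset.mem_univ _⟩
      exact ⟨i, Finset.mem_filter.mpr ⟨Finset.mem_univ _,
        fun j => hi j (Finset.mem_univ _)⟩⟩)

/-- One step of the one-dimensional SOM algorithm. -/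
def somUpdate {n : ℕ} [NeZero n] (Λ : ℕ → ℝ) (ε : ℝ) (m : Fin n → ℝ) (x : ℝ) :
    Fin n → ℝ :=
  fun i => m i - ε * Λ (Nat.dist i.1 (winner m x).1) * (m i - x)

/-- `F_n^+` : increasingly ordered states with values in `(0,1)`. -/
def Fplus (n : ℕ) : Set (Fin n → ℝ) :=
  {m | StrictMono m ∧ ∀ i, m i ∈ Set.Ioo (0 : ℝ) 1}

/-- The SOM process started at `m0`. -/
def somProc {n : ℕ} [NeZero n] {Ω : Type*} (Λ : ℕ → ℝ) (ε : ℕ → ℝ)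
    (X : ℕ → Ω → ℝ) (m0 : Fin n → ℝ) : ℕ → Ω → Fin n → ℝ
  | 0 => fun _ => m0
  | t + 1 => fun ω => somUpdate Λ (ε (t + 1)) (somProc Λ ε X m0 t ω) (X (t + 1) ω)

/-- The Voronoi boundary points `x_0 = 0`, `x_j = (m_j + m_{j+1})/2`, `x_n = 1`. -/
def somBnd {n : ℕ} (m : Fin n → ℝ) (j : ℕ) : ℝ :=
  if j = 0 then 0
  else if h : j < n then
    (m ⟨j - 1, lt_of_le_of_lt (Nat.sub_le j 1) h⟩ + m ⟨j, h⟩) / 2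
  else 1

/-- The mean field of the one-dimensional SOM algorithm. -/
def meanField {n : ℕ} (Λ : ℕ → ℝ) (f : ℝ → ℝ) (m : Fin n → ℝ) : Fin n → ℝ :=
  fun i => ∑ j : Fin n, Λ (Nat.dist i.1 j.1) *
    ∫ x in Set.Icc (somBnd m j.1) (somBnd m (j.1 + 1)), (m i - x) * f x

/-- Hypothesis `H_Λ`. -/
def HLambda (n : ℕ) (Λ : ℕ → ℝ) : Prop :=
  ∃ k₀ : ℕ, 2 * k₀ + 1 < n ∧ Λ (k₀ + 1) < Λ k₀

/-- Hypothesis `H_μ` on the density `f`. -/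
def Hmu (f : ℝ → ℝ) : Prop :=
  (∀ x ∈ Set.Ioo (0 : ℝ) 1, 0 < f x) ∧
  (StrictConcaveOn ℝ (Set.Ioo (0 : ℝ) 1) (fun x => Real.log (f x)) ∨
    (ConcaveOn ℝ (Set.Ioo (0 : ℝ) 1) (fun x => Real.log (f x)) ∧
      ∃ a b : ℝ, Tendsto f (nhdsWithin 0 (Set.Ioi 0)) (nhds a) ∧
        Tendsto f (nhdsWithin 1 (Set.Iio 1)) (nhds b) ∧ 0 < a + b))

/-!
Extend the mean field `h` to the closed simplex of ordered states. The half step `m ↦ m - h m / 2`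
is order-preserving there, and `H_Λ` forces every zero of `h` in the closed simplex to lie in
`F_n^+`, hence to be `m★`. Let `a` be the coordinatewise liminf of a trajectory in the simplex that
obeys the drift `-h`. If some `h a i` were negative, then by order preservation the `i`-th
coordinate would drift upwards, at a rate bounded away from zero, whenever it is near `a i` or
below, and so would end up above its own liminf. Hence `h a ≥ 0`, the iterates of the half step
from `a` decrease to a zero of `h`, and `m★ ≤ a`. The reflection `m i ↦ 1 - m (n + 1 - i)` gives the
dual bound for the limsup, hence convergence to `m★`.

Since the full step `m - h m` stays in the simplex, the ODE and the SOM updates preserve `F_n^+`.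
The SOM process obeys the drift almost surely: by `∑ ε² < ∞` its noise martingale converges, and
`∑ ε = ∞` leaves the drift the time it needs.
-/

/-- The neighborhood functions `Λ` of the SOM algorithm: nonincreasing, nonnegative and normalized
by `Λ 0 = 1`. -/
structure IsNeighborhoodFunction (Λ : ℕ → ℝ) : Prop where
  antitone : Antitone Λ
  map_zero : Λ 0 = 1
  nonneg : ∀ k, 0 ≤ Λ k

lemma IsNeighborhoodFunction.le_one {Λ : ℕ → ℝ} (hΛ : IsNeighborhoodFunction Λ) (k : ℕ) :
    Λ k ≤ 1 :=
  hΛ.map_zero ▸ hΛ.antitone k.zero_le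

/-- The closed counterpart of `Fplus n`: nondecreasing states with values in `[0,1]`. -/
def orderedSimplex (n : ℕ) : Set (Fin n → ℝ) :=
  {m | Monotone m ∧ ∀ i, m i ∈ Icc (0 : ℝ) 1}

section OrderedSimplex

variable {n : ℕ} {m v : Fin n → ℝ}

lemma Fplus_subset_orderedSimplex : Fplus n ⊆ orderedSimplex n :=
  fun _ hm => ⟨hm.1.monotone, fun i => Ioo_subset_Icc_self (hm.2 i)⟩

lemma isClosed_orderedSimplex : IsClosed (orderedSimplex n) := by
  have hIcc : IsClosed {m : Fin n → ℝ | ∀ i, m i ∈ Icc (0 : ℝ) 1} := by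
    simp only [ofPred_forall]
    exact isClosed_iInter fun i => isClosed_Icc.preimage (continuous_apply i)
  exact isClosed_monotone.inter hIcc

lemma convex_orderedSimplex : Convex ℝ (orderedSimplex n) := by
  intro m hm v hv a b ha hb hab
  refine ⟨fun i j hij => ?_, fun i => convex_Icc 0 1 (hm.2 i) (hv.2 i) ha hb hab⟩
  exact add_le_add (mul_le_mul_of_nonneg_left (hm.1 hij) ha)
    (mul_le_mul_of_nonneg_left (hv.1 hij) hb)

lemma isOpen_Fplus : IsOpen (Fplus n) := by
  have hmono : IsOpen {m : Fin n → ℝ | StrictMono m} := by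
    simp only [StrictMono, ofPred_forall]
    exact isOpen_iInter_of_finite fun i => isOpen_iInter_of_finite fun j =>
      isOpen_iInter_of_finite fun _ => isOpen_lt (continuous_apply i) (continuous_apply j)
  have hIoo : IsOpen {m : Fin n → ℝ | ∀ i, m i ∈ Ioo (0 : ℝ) 1} := by
    simp only [ofPred_forall]
    exact isOpen_iInter_of_finite fun i => isOpen_Ioo.preimage (continuous_apply i)
  exact hmono.inter hIoo

lemma sub_smul_mem_Fplus (hm : m ∈ Fplus n) (hv : m - v ∈ orderedSimplex n) {η : ℝ}
    (hη : η ∈ Ico (0 : ℝ) 1) : m - η • v ∈ Fplus n := by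
  have hcomb : ∀ i, (m - η • v) i = (1 - η) * m i + η * (m - v) i := fun i => by
    simp only [Pi.sub_apply, Pi.smul_apply, smul_eq_mul]; ring
  have hη' : 0 < 1 - η := sub_pos.2 hη.2
  refine ⟨fun i j hij => ?_, fun i => ?_⟩
  · rw [hcomb, hcomb]
    exact add_lt_add_of_lt_of_le (mul_lt_mul_of_pos_left (hm.1 hij) hη')
      (mul_le_mul_of_nonneg_left (hv.1 hij.le) hη.1)
  · rw [hcomb, ← interior_Icc]
    refine (convex_Icc (0 : ℝ) 1).combo_interior_self_mem_interior ?_ (hv.2 i) hη' hη.1 (by ring)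
    rw [interior_Icc]
    exact hm.2 i

end OrderedSimplex

section Cells

variable {n : ℕ} {m m' : Fin n → ℝ} {x : ℝ}

lemma somBnd_succ {j : ℕ} (h : j + 1 < n) :
    somBnd m (j + 1) = (m ⟨j, by omega⟩ + m ⟨j + 1, h⟩) / 2 := by
  simp only [somBnd, Nat.add_eq_zero_iff, one_ne_zero, and_false, if_false, h, dite_true,
    Nat.add_sub_cancel]

lemma somBnd_zero : somBnd m 0 = 0 := if_pos rfl

lemma somBnd_self [NeZero n] : somBnd m n = 1 := by
  simp only [somBnd, NeZero.ne n, if_false, lt_irrefl, dite_false]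

lemma somBnd_mono_left (h : m ≤ m') (j : ℕ) : somBnd m j ≤ somBnd m' j := by
  unfold somBnd
  split_ifs with h0 hj
  · exact le_rfl
  · linarith [h ⟨j - 1, by omega⟩, h ⟨j, hj⟩]
  · exact le_rfl

lemma somBnd_succ_mono (hm : Monotone m) {j k : ℕ} (hjk : j ≤ k) (hk : k + 1 < n) :
    somBnd m (j + 1) ≤ somBnd m (k + 1) := by
  rw [somBnd_succ hk, somBnd_succ (by omega)]
  have hl : m ⟨j, by omega⟩ ≤ m ⟨k, by omega⟩ := hm (Fin.mk_le_mk.2 hjk)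
  have hr : m ⟨j + 1, by omega⟩ ≤ m ⟨k + 1, hk⟩ := hm (Fin.mk_le_mk.2 (by omega))
  linarith

lemma continuous_somBnd (j : ℕ) : Continuous fun m : Fin n → ℝ => somBnd m j := by
  unfold somBnd
  split_ifs <;> fun_prop

/-- The index of the Voronoi cell of `m` that contains `x`, encoded as the number of interior
boundary points below `x`; unlike `winner`, it only depends on these points, and is therefore
monotone in `m` even when some units coincide. -/
def cellIndex (m : Fin n → ℝ) (x : ℝ) : ℕ :=
  Nat.count (fun j => somBnd m (j + 1) < x) (n - 1)

lemma cellIndex_lt [NeZero n] (m : Fin n → ℝ) (x : ℝ) : cellIndex m x < n :=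
  (Nat.count_le _).trans_lt (Nat.sub_lt (NeZero.pos n) one_pos)

lemma cellIndex_anti (h : m ≤ m') (x : ℝ) : cellIndex m' x ≤ cellIndex m x :=
  Nat.count_mono_left fun _ _ => (somBnd_mono_left h _).trans_lt

lemma lt_cellIndex_iff (hm : Monotone m) {j : ℕ} (hj : j + 1 < n) :
    j < cellIndex m x ↔ somBnd m (j + 1) < x := by
  constructor
  · intro hlt
    obtain ⟨k, ⟨hjk, hk⟩, hkx⟩ :=
      Nat.exists_of_count_lt_count ((Nat.count_le (fun j => somBnd m (j + 1) < x)).trans_lt hlt)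
    exact (somBnd_succ_mono hm hjk (by omega)).trans_lt hkx
  · intro hx
    have hcount : Nat.count (fun j => somBnd m (j + 1) < x) (j + 1) = j + 1 :=
      Nat.count_of_forall fun k hk =>
        (somBnd_succ_mono hm (Nat.lt_succ_iff.1 hk) hj).trans_lt hx
    have hle := Nat.count_monotone (fun j => somBnd m (j + 1) < x)
      (show j + 1 ≤ n - 1 by omega)
    exact (hcount.symm.trans_le hle)

lemma le_cellIndex (hm : Monotone m) {i : Fin n} (h : m i < x) : i.1 ≤ cellIndex m x := by
  obtain ⟨_ | k, hk⟩ := i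
  · exact Nat.zero_le _
  · refine (lt_cellIndex_iff hm hk).2 ?_
    have hle : m ⟨k, by omega⟩ ≤ m ⟨k + 1, hk⟩ := hm (Fin.mk_le_mk.2 k.le_succ)
    rw [somBnd_succ hk]
    linarith

lemma cellIndex_le (hm : Monotone m) {i : Fin n} (h : x ≤ m i) : cellIndex m x ≤ i.1 := by
  have : NeZero n := ⟨i.pos.ne'⟩
  by_contra! hlt
  have hi : i.1 + 1 < n := by have := cellIndex_lt m x; omega
  have hx := (lt_cellIndex_iff hm hi).1 hlt
  have hle : m i ≤ m ⟨i + 1, hi⟩ := hm (Fin.le_def.2 i.1.le_succ)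
  rw [somBnd_succ hi] at hx
  linarith

lemma somBnd_lt_iff (hm : Monotone m) (hx : 0 < x) (j : Fin n) :
    somBnd m j < x ↔ j.1 ≤ cellIndex m x := by
  obtain ⟨_ | j, hj⟩ := j
  · simp only [somBnd_zero, hx, Nat.zero_le]
  · exact (lt_cellIndex_iff hm hj).symm

lemma le_somBnd_succ_iff [NeZero n] (hm : Monotone m) (hx : x < 1) (j : Fin n) :
    x ≤ somBnd m (j + 1) ↔ cellIndex m x ≤ j := by
  rcases (Nat.succ_le_of_lt j.2).lt_or_eq with hj | hj
  · rw [← not_lt, ← lt_cellIndex_iff hm hj, not_lt]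
  · have hlt := cellIndex_lt m x
    rw [← Nat.succ_eq_add_one, hj, somBnd_self]
    exact iff_of_true hx.le (by omega)

lemma cellIndex_eq_iff [NeZero n] (hm : Monotone m) (hx : x ∈ Ioo (0 : ℝ) 1) (j : Fin n) :
    cellIndex m x = j ↔ x ∈ Ioc (somBnd m j) (somBnd m (j + 1)) := by
  rw [mem_Ioc, somBnd_lt_iff hm hx.1, le_somBnd_succ_iff hm hx.2, and_comm, le_antisymm_iff]

lemma winner_eq_iff [NeZero n] (m : Fin n → ℝ) (x : ℝ) (i : Fin n) :
    winner m x = i ↔ (∀ j, |x - m i| ≤ |x - m j|) ∧ ∀ j < i, |x - m i| < |x - m j| := by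
  have hmin : ∀ k, winner m x = k ↔ (∀ j, |x - m k| ≤ |x - m j|) ∧
      ∀ l, (∀ j, |x - m l| ≤ |x - m j|) → k ≤ l := fun k => by
    simp only [winner, Finset.min'_eq_iff, Finset.mem_filter_univ]
  rw [hmin i]
  refine and_congr_right fun hi => ⟨fun h j hji => ?_, fun h l hl => ?_⟩
  · by_contra! hle
    exact (h j fun k => hle.trans (hi k)).not_gt hji
  · by_contra! hli
    exact (h l hli).not_ge (hl i)

lemma winner_eq_cellIndex [NeZero n] (hm : StrictMono m) (x : ℝ) :
    (winner m x).1 = cellIndex m x := by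
  obtain ⟨hmin, hfirst⟩ := (winner_eq_iff m x _).1 rfl
  generalize hw : winner m x = w at *
  refine le_antisymm ?_ ?_
  · obtain ⟨_ | k, hk⟩ := w
    · exact Nat.zero_le _
    · have hkw : (⟨k, by omega⟩ : Fin n) < ⟨k + 1, hk⟩ := Fin.mk_lt_mk.2 k.lt_succ_self
      refine (lt_cellIndex_iff hm.monotone hk).2 ?_
      rw [somBnd_succ hk]
      have hlt := sq_lt_sq.2 (hfirst _ hkw)
      nlinarith [hm hkw]
  · by_contra! hlt
    have hk : w.1 + 1 < n := by have := cellIndex_lt m x; omega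
    have hwk : w < ⟨w + 1, hk⟩ := Fin.lt_def.2 w.1.lt_succ_self
    have hx := (lt_cellIndex_iff hm.monotone hk).1 hlt
    rw [somBnd_succ hk] at hx
    have hle := sq_le_sq.2 (hmin ⟨w + 1, hk⟩)
    nlinarith [hm hwk]

lemma measurable_winner [NeZero n] : Measurable fun p : (Fin n → ℝ) × ℝ => winner p.1 p.2 := by
  refine measurable_to_countable' fun i => ?_
  have hset : (fun p : (Fin n → ℝ) × ℝ => winner p.1 p.2) ⁻¹' {i} =
      {p | (∀ j, |p.2 - p.1 i| ≤ |p.2 - p.1 j|) ∧ ∀ j < i, |p.2 - p.1 i| < |p.2 - p.1 j|} := by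
    ext p
    exact winner_eq_iff p.1 p.2 i
  rw [hset]
  measurability

lemma measurable_cellIndex : Measurable fun p : (Fin n → ℝ) × ℝ => cellIndex p.1 p.2 := by
  simp only [cellIndex, Nat.count_eq_card_filter_range, Finset.card_filter]
  refine Finset.measurable_sum _ fun j _ => Measurable.ite ?_ measurable_const measurable_const
  exact measurableSet_lt ((continuous_somBnd _).measurable.comp measurable_fst) measurable_snd

lemma eventually_cellIndex_eq (hx : ∀ j < n - 1, somBnd m (j + 1) ≠ x) :
    ∀ᶠ m' in 𝓝 m, cellIndex m' x = cellIndex m x := by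
  have hsame : ∀ j ∈ Finset.range (n - 1),
      ∀ᶠ m' in 𝓝 m, (somBnd m' (j + 1) < x ↔ somBnd m (j + 1) < x) := fun j hj => by
    have hcont := (continuous_somBnd (j + 1)).tendsto m
    rcases (hx j (Finset.mem_range.1 hj)).lt_or_gt with h | h
    · filter_upwards [hcont.eventually_lt_const h] with m' hm' using iff_of_true hm' h
    · filter_upwards [hcont.eventually_const_lt h] with m' hm'
        using iff_of_false hm'.not_gt h.not_gt
  filter_upwards [(Finset.eventually_all _).2 hsame] with m' hm'
  simp only [cellIndex, Nat.count_eq_card_filter_range, Finset.filter_congr hm']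

end Cells

section Field

variable {n : ℕ} {Λ : ℕ → ℝ} {m m' : Fin n → ℝ} {x : ℝ} {i j : Fin n}

/-- The displacement of the units caused by the input `x`: the SOM step from `m` with gain `ε` is
`m - ε • somField Λ m x`. Using `cellIndex` for the winner extends it to states with ties. -/
def somField (Λ : ℕ → ℝ) (m : Fin n → ℝ) (x : ℝ) : Fin n → ℝ :=
  fun i => Λ (Nat.dist i (cellIndex m x)) * (m i - x)

lemma somUpdate_eq_sub_smul_somField [NeZero n] (hm : StrictMono m) (Λ : ℕ → ℝ) (ε x : ℝ) :
    somUpdate Λ ε m x = m - ε • somField Λ m x := by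
  ext i
  simp only [somUpdate, somField, winner_eq_cellIndex hm, Pi.sub_apply, Pi.smul_apply,
    smul_eq_mul, mul_assoc]

lemma weight_le_of_le_left (hΛ : Antitone Λ) (hm : Monotone m) (hij : i ≤ j) (hx : x ≤ m i) :
    Λ (Nat.dist j (cellIndex m x)) ≤ Λ (Nat.dist i (cellIndex m x)) := by
  have hc := cellIndex_le hm hx
  have : i.1 ≤ j.1 := hij
  exact hΛ (by unfold Nat.dist; omega)

lemma weight_le_of_right_lt (hΛ : Antitone Λ) (hm : Monotone m) (hij : i ≤ j) (hx : m j < x) :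
    Λ (Nat.dist i (cellIndex m x)) ≤ Λ (Nat.dist j (cellIndex m x)) := by
  have hc := le_cellIndex hm hx
  have : i.1 ≤ j.1 := hij
  exact hΛ (by unfold Nat.dist; omega)

lemma somField_anti_of_eq (hΛ : Antitone Λ) (hm : Monotone m) (x : ℝ) (hij : i ≤ j)
    (he : m i = m j) : somField Λ m x j ≤ somField Λ m x i := by
  simp only [somField, he]
  rcases le_or_gt x (m j) with hx | hx
  · exact mul_le_mul_of_nonneg_right (weight_le_of_le_left hΛ hm hij (he ▸ hx))
      (sub_nonneg.2 hx)
  · exact mul_le_mul_of_nonpos_right (weight_le_of_right_lt hΛ hm hij hx) (sub_neg.2 hx).le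

lemma abs_somField_le (hΛ : IsNeighborhoodFunction Λ) (m : Fin n → ℝ) (x : ℝ) (i : Fin n) :
    |somField Λ m x i| ≤ |m i - x| := by
  rw [somField, abs_mul, abs_of_nonneg (hΛ.nonneg _)]
  exact mul_le_of_le_one_left (abs_nonneg _) (hΛ.le_one _)

lemma monotone_sub_somField (hΛ : IsNeighborhoodFunction Λ) (hm : Monotone m) (x : ℝ) :
    Monotone (m - somField Λ m x) := by
  intro i j hij
  simp only [Pi.sub_apply, somField]
  set a := Λ (Nat.dist i (cellIndex m x))
  set b := Λ (Nat.dist j (cellIndex m x))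
  have ha1 : a ≤ 1 := hΛ.le_one _
  have hb1 : b ≤ 1 := hΛ.le_one _
  rcases le_or_gt x (m i) with hi | hi
  · have hba : b ≤ a := weight_le_of_le_left hΛ.antitone hm hij hi
    nlinarith [hm hij]
  · rcases lt_or_ge (m j) x with hj | hj
    · have hab : a ≤ b := weight_le_of_right_lt hΛ.antitone hm hij hj
      nlinarith [hm hij]
    · nlinarith

lemma sub_somField_mem_orderedSimplex (hΛ : IsNeighborhoodFunction Λ) (hm : m ∈ orderedSimplex n)
    (hx : x ∈ Icc (0 : ℝ) 1) : m - somField Λ m x ∈ orderedSimplex n := by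
  refine ⟨monotone_sub_somField hΛ hm.1 x, fun i => ?_⟩
  have hcomb := convex_Icc (0 : ℝ) 1 (hm.2 i) hx
    (sub_nonneg.2 (hΛ.le_one (Nat.dist i (cellIndex m x)))) (hΛ.nonneg _) (by ring)
  convert hcomb using 1
  simp only [somField, Pi.sub_apply, smul_eq_mul]
  ring

/- Each unit moves by a fraction of its distance to the input, and this fraction jumps by at most
one when the winner changes; the factor `1 / 2` absorbs that jump. -/
lemma half_step_somField_mono (hΛ : IsNeighborhoodFunction Λ) (hm : Monotone m)
    (hm' : Monotone m') (h : m ≤ m') (x : ℝ) :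
    m - (1 / 2 : ℝ) • somField Λ m x ≤ m' - (1 / 2 : ℝ) • somField Λ m' x := by
  intro i
  have hi := h i
  have hc := cellIndex_anti h x
  simp only [Pi.sub_apply, Pi.smul_apply, smul_eq_mul, somField]
  set a := Λ (Nat.dist i (cellIndex m x))
  set a' := Λ (Nat.dist i (cellIndex m' x))
  have ha0 : 0 ≤ a := hΛ.nonneg _
  have ha1 : a ≤ 1 := hΛ.le_one _
  have ha0' : 0 ≤ a' := hΛ.nonneg _
  have ha1' : a' ≤ 1 := hΛ.le_one _
  rcases lt_or_ge (m' i) x with hx' | hx'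
  · have hle : a ≤ a' := by
      have hic := le_cellIndex hm' hx'
      exact hΛ.antitone (by unfold Nat.dist; omega)
    nlinarith
  · rcases le_or_gt x (m i) with hx | hx
    · have hle : a' ≤ a := by
        have hci := cellIndex_le hm hx
        exact hΛ.antitone (by unfold Nat.dist; omega)
      nlinarith
    · nlinarith

lemma measurable_somField (Λ : ℕ → ℝ) :
    Measurable fun p : (Fin n → ℝ) × ℝ => somField Λ p.1 p.2 := by
  refine measurable_pi_lambda _ fun i => Measurable.mul ?_ ?_
  · exact (measurable_of_countable fun k : ℕ => Λ (Nat.dist i k)).comp measurable_cellIndex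
  · fun_prop

lemma measurable_somUpdate [NeZero n] (Λ : ℕ → ℝ) (ε : ℝ) :
    Measurable fun p : (Fin n → ℝ) × ℝ => somUpdate Λ ε p.1 p.2 := by
  refine measurable_pi_lambda _ fun i => ?_
  have hweight : Measurable fun p : (Fin n → ℝ) × ℝ => Λ (Nat.dist i (winner p.1 p.2)) :=
    (measurable_of_countable fun k : Fin n => Λ (Nat.dist i k)).comp measurable_winner
  exact (measurable_pi_apply i).comp measurable_fst |>.sub <|
    (hweight.const_mul ε).mul (((measurable_pi_apply i).comp measurable_fst).sub measurable_snd)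

lemma continuousAt_somField (hx : ∀ j < n - 1, somBnd m (j + 1) ≠ x) (Λ : ℕ → ℝ) :
    ContinuousAt (fun m => somField Λ m x) m := by
  refine continuousAt_pi.2 fun i => ?_
  have hcont : Continuous fun m' : Fin n → ℝ => Λ (Nat.dist i (cellIndex m x)) * (m' i - x) :=
    continuous_const.mul ((continuous_apply i).sub continuous_const)
  refine hcont.continuousAt.congr ?_
  filter_upwards [eventually_cellIndex_eq hx] with m' hm'
  simp only [somField, hm']

lemma somField_eq_sum_indicator [NeZero n] (hm : Monotone m) (hx : x ∈ Ioo (0 : ℝ) 1)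
    (Λ : ℕ → ℝ) (i : Fin n) :
    somField Λ m x i = ∑ j : Fin n, Λ (Nat.dist i j) *
      (Ioc (somBnd m j) (somBnd m (j + 1))).indicator (fun y => m i - y) x := by
  have hc := cellIndex_lt m x
  rw [Finset.sum_eq_single (⟨cellIndex m x, hc⟩ : Fin n)]
  · rw [indicator_of_mem ((cellIndex_eq_iff hm hx ⟨cellIndex m x, hc⟩).1 rfl), somField]
  · intro j _ hj
    rw [indicator_of_notMem, mul_zero]
    exact fun hxj => hj (Fin.ext ((cellIndex_eq_iff hm hx j).2 hxj).symm)
  · exact fun h => absurd (Finset.mem_univ _) h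

end Field

section AveragedField

variable {n : ℕ} {Λ : ℕ → ℝ} {m m' : Fin n → ℝ} {μ : Measure ℝ}

/-- The mean field of the SOM algorithm for inputs of arbitrary law `μ`; for a law with density `f`
it is `meanField Λ f`. -/
def measureMeanField (Λ : ℕ → ℝ) (μ : Measure ℝ) (m : Fin n → ℝ) : Fin n → ℝ :=
  fun i => ∑ j : Fin n, Λ (Nat.dist i j) *
    ∫ x in Icc (somBnd m j) (somBnd m (j + 1)), (m i - x) ∂μ

/-- The mean displacement of the units under an input of law `μ`. It agrees with
`measureMeanField` on ordered states, and as an integral inherits the order properties of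
`somField`. -/
def avgField (Λ : ℕ → ℝ) (μ : Measure ℝ) (m : Fin n → ℝ) : Fin n → ℝ :=
  ∫ x, somField Λ m x ∂μ

lemma norm_somField_le (hΛ : IsNeighborhoodFunction Λ) (m : Fin n → ℝ) {x : ℝ}
    (hx : x ∈ Icc (0 : ℝ) 1) : ‖somField Λ m x‖ ≤ ‖m‖ + 1 := by
  refine (pi_norm_le_iff_of_nonneg (by positivity)).2 fun i => (abs_somField_le hΛ m x i).trans ?_
  have hxn : |x| ≤ 1 := abs_le.2 ⟨by linarith [hx.1], hx.2⟩
  exact (abs_sub _ _).trans (add_le_add (norm_le_pi_norm m i) hxn)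

lemma measurable_somField_apply (Λ : ℕ → ℝ) (m : Fin n → ℝ) : Measurable (somField Λ m) :=
  Measurable.of_uncurry_left (f := somField Λ) (measurable_somField Λ)

lemma integrable_somField [IsFiniteMeasure μ] (hΛ : IsNeighborhoodFunction Λ)
    (hμ : ∀ᵐ x ∂μ, x ∈ Icc (0 : ℝ) 1) (m : Fin n → ℝ) : Integrable (somField Λ m) μ :=
  Integrable.of_bound (measurable_somField_apply Λ m).aestronglyMeasurable (‖m‖ + 1)
    (hμ.mono fun _ hx => norm_somField_le hΛ m hx)

lemma avgField_apply [IsFiniteMeasure μ] (hΛ : IsNeighborhoodFunction Λ)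
    (hμ : ∀ᵐ x ∂μ, x ∈ Icc (0 : ℝ) 1) (m : Fin n → ℝ) (i : Fin n) :
    avgField Λ μ m i = ∫ x, somField Λ m x i ∂μ :=
  eval_integral (fun i => (integrable_somField hΛ hμ m).eval i) i

lemma continuous_avgField [IsFiniteMeasure μ] [NullSingletonClass μ]
    (hΛ : IsNeighborhoodFunction Λ) (hμ : ∀ᵐ x ∂μ, x ∈ Icc (0 : ℝ) 1) :
    Continuous (avgField Λ μ : (Fin n → ℝ) → Fin n → ℝ) := by
  refine continuous_iff_continuousAt.2 fun m => continuousAt_of_dominated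
    (bound := fun _ => ‖m‖ + 1 + 1) ?_ ?_ (integrable_const _) ?_
  · exact Eventually.of_forall fun m => (measurable_somField_apply Λ m).aestronglyMeasurable
  · have hnear : ∀ᶠ m' in 𝓝 m, ‖m'‖ < ‖m‖ + 1 :=
      continuous_norm.continuousAt.eventually_lt_const (lt_add_one _)
    filter_upwards [hnear] with m' hm'
    filter_upwards [hμ] with x hx
    exact (norm_somField_le hΛ m' hx).trans (by linarith)
  · have hne : ∀ᵐ x ∂μ, ∀ j ∈ Finset.range (n - 1), somBnd m (j + 1) ≠ x :=
      (Finset.eventually_all _).2 fun j _ => (μ.ae_ne _).mono fun _ => Ne.symm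
    filter_upwards [hne] with x hx
    exact continuousAt_somField (fun j hj => hx j (Finset.mem_range.2 hj)) Λ

lemma sub_avgField_mem_orderedSimplex [IsProbabilityMeasure μ] (hΛ : IsNeighborhoodFunction Λ)
    (hμ : ∀ᵐ x ∂μ, x ∈ Icc (0 : ℝ) 1) (hm : m ∈ orderedSimplex n) :
    m - avgField Λ μ m ∈ orderedSimplex n := by
  have hint := integrable_somField hΛ hμ m
  have hmem : ∫ x, (m - somField Λ m x) ∂μ ∈ orderedSimplex n :=
    convex_orderedSimplex.integral_mem isClosed_orderedSimplex
      (hμ.mono fun _ => sub_somField_mem_orderedSimplex hΛ hm) ((integrable_const m).sub hint)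
  rwa [integral_sub (integrable_const m) hint, integral_const, probReal_univ, one_smul] at hmem

lemma half_step_avgField_mono [IsProbabilityMeasure μ] (hΛ : IsNeighborhoodFunction Λ)
    (hμ : ∀ᵐ x ∂μ, x ∈ Icc (0 : ℝ) 1) (hm : Monotone m) (hm' : Monotone m') (h : m ≤ m') :
    m - (1 / 2 : ℝ) • avgField Λ μ m ≤ m' - (1 / 2 : ℝ) • avgField Λ μ m' := by
  have hstep : ∀ m : Fin n → ℝ, Integrable (fun x => m - (1 / 2 : ℝ) • somField Λ m x) μ ∧
      ∫ x, (m - (1 / 2 : ℝ) • somField Λ m x) ∂μ = m - (1 / 2 : ℝ) • avgField Λ μ m := fun m => by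
    have hint : Integrable (fun x => (1 / 2 : ℝ) • somField Λ m x) μ :=
      (integrable_somField hΛ hμ m).smul (1 / 2 : ℝ)
    refine ⟨(integrable_const m).sub hint, ?_⟩
    rw [integral_sub (integrable_const m) hint, integral_const, probReal_univ, one_smul,
      integral_smul, avgField]
  rw [← (hstep m).2, ← (hstep m').2]
  exact integral_mono (hstep m).1 (hstep m').1 (half_step_somField_mono hΛ hm hm' h)

lemma measureMeanField_eq_avgField [NeZero n] [IsFiniteMeasure μ] [NullSingletonClass μ]
    (hΛ : IsNeighborhoodFunction Λ) (hμ : ∀ᵐ x ∂μ, x ∈ Icc (0 : ℝ) 1) (hm : Monotone m) :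
    measureMeanField Λ μ m = avgField Λ μ m := by
  have hμ' : ∀ᵐ x ∂μ, x ∈ Ioo (0 : ℝ) 1 := by
    filter_upwards [hμ, μ.ae_ne 0, μ.ae_ne 1] with x hx h0 h1
    exact ⟨hx.1.lt_of_ne h0.symm, hx.2.lt_of_ne h1⟩
  have hint : ∀ i, Integrable (fun x => m i - x) μ := fun i =>
    Integrable.of_bound (by fun_prop) (|m i| + 1) <| hμ.mono fun x hx =>
      (abs_sub _ _).trans <| by gcongr; exact abs_le.2 ⟨by linarith [hx.1], hx.2⟩
  ext i
  rw [avgField_apply hΛ hμ, integral_congr_ae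
    (hμ'.mono fun x hx => somField_eq_sum_indicator hm hx Λ i), integral_finsetSum]
  · simp only [measureMeanField, integral_const_mul, integral_Icc_eq_integral_Ioc,
      integral_indicator measurableSet_Ioc]
  · exact fun j _ => ((hint i).indicator measurableSet_Ioc).const_mul _

end AveragedField

section Zeros

variable {n : ℕ} {Λ : ℕ → ℝ} {m : Fin n → ℝ} {μ : Measure ℝ}

lemma IsNeighborhoodFunction.eq_one_of_le (hΛ : IsNeighborhoodFunction Λ) {a b : ℕ} (hab : a ≤ b)
    (hb : Λ b = 1) : Λ a = 1 :=
  le_antisymm (hΛ.le_one a) (hb ▸ hΛ.antitone hab)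

lemma exists_first_of_block {α : Type*} [PartialOrder α] {m : Fin n → α} (hm : Monotone m)
    (i : Fin n) : ∃ p ≤ i, m p = m i ∧ ∀ t < p, m t < m p := by
  obtain ⟨p, hp, hmin⟩ := WellFounded.has_min wellFounded_lt {t | m t = m i} ⟨i, rfl⟩
  refine ⟨p, not_lt.1 (hmin i rfl), hp, fun t ht => (hm ht.le).lt_of_ne fun h => ?_⟩
  exact hmin t (h.trans hp) ht

lemma exists_last_of_block {α : Type*} [PartialOrder α] {m : Fin n → α} (hm : Monotone m)
    (i : Fin n) : ∃ q ≥ i, m q = m i ∧ ∀ t > q, m q < m t := by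
  obtain ⟨q, hq, hmax⟩ := WellFounded.has_min wellFounded_gt {t | m t = m i} ⟨i, rfl⟩
  refine ⟨q, not_lt.1 (hmax i rfl), hq, fun t ht => (hm ht.le).lt_of_ne fun h => ?_⟩
  exact hmax t (h.symm.trans hq) ht

/- Let `P` and `p'` be the first indices of the blocks of `q` and of `i = q - (d + 1)`. If `i < P`,
then `P - i ≤ d`, and the weight `1` at distance `P - i` is carried over, by the tie between `i` and
`p'` seen from `P`, to the distance `P - p'`, and then, by the tie between `P` and `q` seen from
`p'`, to the distance `q - p' ≥ d + 1`. -/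
lemma weight_eq_one_of_tie {α : Type*} [PartialOrder α] {m : Fin n → α}
    (hΛ : IsNeighborhoodFunction Λ) (hm : Monotone m)
    (htie : ∀ i j k, m i = m j → (∀ t < k, m t < m k) → Λ (Nat.dist i k) = Λ (Nat.dist j k))
    {p q : Fin n} (hpq : p < q) (he : m p = m q) : ∀ d ≤ q.1, Λ d = 1 := by
  obtain ⟨P, hPp, hPm, hPfirst⟩ := exists_first_of_block hm p
  have hPq : P.1 < q.1 := hPp.trans_lt hpq
  have hPq_eq : m P = m q := hPm.trans he
  intro d
  induction d with
  | zero => exact fun _ => hΛ.map_zero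
  | succ d ih =>
    intro hd
    obtain ⟨i, hi⟩ : ∃ i : Fin n, i.1 = q - (d + 1) := ⟨⟨q - (d + 1), by omega⟩, rfl⟩
    rcases le_or_gt P.1 i.1 with hPi | hiP
    · have hdist : Λ (Nat.dist q P) = 1 := by
        rw [htie q P P hPq_eq.symm hPfirst, Nat.dist_self, hΛ.map_zero]
      exact hΛ.eq_one_of_le (by unfold Nat.dist; omega) hdist
    · obtain ⟨p', hp'i, hp'm, hp'first⟩ := exists_first_of_block hm i
      have : p'.1 ≤ i.1 := hp'i
      have hiP_one : Λ (Nat.dist i P) = 1 :=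
        hΛ.eq_one_of_le (by unfold Nat.dist; omega) (ih (by omega))
      have hqp'_one : Λ (Nat.dist q p') = 1 := by
        rw [htie q P p' hPq_eq.symm hp'first, Nat.dist_comm, htie p' i P hp'm hPfirst, hiP_one]
      exact hΛ.eq_one_of_le (by unfold Nat.dist; omega) hqp'_one

lemma dist_rev_rev (i k : Fin n) : Nat.dist i.rev k.rev = Nat.dist i k := by
  simp only [Fin.val_rev, Nat.dist]
  omega

lemma injective_of_tie {α : Type*} [PartialOrder α] {m : Fin n → α}
    (hΛ : IsNeighborhoodFunction Λ) (hHΛ : HLambda n Λ) (hm : Monotone m)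
    (htie : ∀ i j k, m i = m j → ((∀ t < k, m t < m k) ∨ ∀ t > k, m k < m t) →
      Λ (Nat.dist i k) = Λ (Nat.dist j k)) : Function.Injective m := by
  obtain ⟨k₀, hk₀, hlt⟩ := hHΛ
  refine .of_lt_imp_ne fun p q hpq he => hlt.not_ge ?_
  have hleft := weight_eq_one_of_tie hΛ hm (fun i j k hij hk => htie i j k hij (.inl hk)) hpq he
  have hright := weight_eq_one_of_tie (m := OrderDual.toDual ∘ m ∘ Fin.rev) hΛ
    (fun i j hij => OrderDual.toDual_le_toDual.2 (hm (Fin.rev_le_rev.2 hij)))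
    (fun i j k hij hk => by
      simpa only [dist_rev_rev] using htie i.rev j.rev k.rev (OrderDual.toDual_inj.1 hij)
        (.inr fun t ht => by
          simpa [OrderDual.toDual_lt_toDual] using hk t.rev (Fin.rev_lt_iff.1 ht)))
    (Fin.rev_lt_rev.2 hpq) (by simpa using he.symm)
  have hone : Λ (k₀ + 1) = 1 := by
    rcases le_or_gt (k₀ + 1) q.1 with h | h
    · exact hleft _ h
    · refine hright _ ?_
      have : p.1 < q.1 := hpq
      rw [Fin.val_rev]
      omega
  exact hone ▸ hΛ.le_one k₀

lemma somBnd_mem_Icc (hm : m ∈ orderedSimplex n) (j : ℕ) : somBnd m j ∈ Icc (0 : ℝ) 1 := by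
  unfold somBnd
  split_ifs with h0 hj
  · exact ⟨le_rfl, zero_le_one⟩
  · have hl := hm.2 ⟨j - 1, by omega⟩
    have hr := hm.2 ⟨j, hj⟩
    exact ⟨by linarith [hl.1, hr.1], by linarith [hl.2, hr.2]⟩
  · exact ⟨zero_le_one, le_rfl⟩

lemma somBnd_lt_of_first {k : Fin n} (h0 : 0 < m k) (hk : ∀ t < k, m t < m k) :
    somBnd m k < m k := by
  obtain ⟨_ | k, hkn⟩ := k
  · rwa [somBnd_zero]
  · have hlt := hk ⟨k, by omega⟩ (Fin.mk_lt_mk.2 k.lt_succ_self)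
    rw [somBnd_succ hkn]
    linarith

lemma lt_somBnd_succ_of_last {k : Fin n} (h1 : m k < 1) (hk : ∀ t > k, m k < m t) :
    m k < somBnd m (k + 1) := by
  have : NeZero n := ⟨k.pos.ne'⟩
  rcases (Nat.succ_le_of_lt k.2).lt_or_eq with hkn | hkn
  · have hlt := hk ⟨k + 1, hkn⟩ (Fin.lt_def.2 k.1.lt_succ_self)
    rw [somBnd_succ hkn]
    linarith
  · rwa [← Nat.succ_eq_add_one, hkn, somBnd_self]

lemma frequently_mem_Ioo (hμ : μ.support = Icc 0 1) {a b : ℝ} (ha : 0 ≤ a) (hab : a < b)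
    (hb : b ≤ 1) : ∃ᶠ x in ae μ, x ∈ Ioo a b := by
  obtain ⟨c, hc⟩ := nonempty_Ioo.2 hab
  have hsupp : c ∈ μ.support := hμ ▸ ⟨ha.trans hc.1.le, hc.2.le.trans hb⟩
  exact frequently_ae_mem_iff.2
    ((Measure.mem_support_iff_forall c).1 hsupp _ (isOpen_Ioo.mem_nhds hc)).ne'

lemma frequently_cellIndex_eq_of_first (hμ : μ.support = Icc 0 1) (hm : m ∈ orderedSimplex n)
    {k : Fin n} (h0 : 0 < m k) (hk : ∀ t < k, m t < m k) :
    ∃ᶠ x in ae μ, x ∈ Ioo 0 (m k) ∧ cellIndex m x = k := by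
  have hbnd := somBnd_mem_Icc hm k
  refine (frequently_mem_Ioo hμ hbnd.1 (somBnd_lt_of_first h0 hk) (hm.2 k).2).mono fun x hx => ?_
  have hx0 : 0 < x := hbnd.1.trans_lt hx.1
  exact ⟨⟨hx0, hx.2⟩,
    (cellIndex_le hm.1 hx.2.le).antisymm ((somBnd_lt_iff hm.1 hx0 k).1 hx.1)⟩

lemma frequently_cellIndex_eq_of_last (hμ : μ.support = Icc 0 1) (hm : m ∈ orderedSimplex n)
    {k : Fin n} (h1 : m k < 1) (hk : ∀ t > k, m k < m t) :
    ∃ᶠ x in ae μ, x ∈ Ioo (m k) 1 ∧ cellIndex m x = k := by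
  have : NeZero n := ⟨k.pos.ne'⟩
  have hbnd := somBnd_mem_Icc hm (k + 1)
  refine (frequently_mem_Ioo hμ (hm.2 k).1 (lt_somBnd_succ_of_last h1 hk) hbnd.2).mono
    fun x hx => ?_
  have hx1 : x < 1 := hx.2.trans_le hbnd.2
  exact ⟨⟨hx.1, hx1⟩,
    ((le_somBnd_succ_iff hm.1 hx1 k).1 hx.2.le).antisymm (le_cellIndex hm.1 hx.1)⟩

lemma ae_mem_Icc_of_support_eq (hμ : μ.support = Icc 0 1) : ∀ᵐ x ∂μ, x ∈ Icc (0 : ℝ) 1 :=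
  hμ ▸ Measure.support_mem_ae

section AveragedZeros

variable [IsFiniteMeasure μ] (hΛ : IsNeighborhoodFunction Λ) (hμ : μ.support = Icc 0 1)
  (hm : m ∈ orderedSimplex n) (hz : avgField Λ μ m = 0)

include hΛ hμ hz in
lemma integral_somField_eq_zero (i : Fin n) : ∫ x, somField Λ m x i ∂μ = 0 := by
  rw [← avgField_apply hΛ (ae_mem_Icc_of_support_eq hμ), hz, Pi.zero_apply]

include hΛ hμ hm hz

lemma pos_of_avgField_eq_zero (i : Fin n) : 0 < m i := by
  refine (hm.2 i).1.lt_of_ne fun hi => ?_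
  obtain ⟨q, -, hqi, hlast⟩ := exists_last_of_block hm.1 i
  have hq0 : m q = 0 := hqi.trans hi.symm
  have hae := ae_mem_Icc_of_support_eq hμ
  have hnonneg : ∀ᵐ x ∂μ, 0 ≤ -somField Λ m x q := hae.mono fun x hx => by
    rw [somField, hq0, zero_sub, mul_neg, neg_neg]
    exact mul_nonneg (hΛ.nonneg _) hx.1
  have hzero : (fun x => -somField Λ m x q) =ᵐ[μ] 0 :=
    (integral_eq_zero_iff_of_nonneg_ae hnonneg ((integrable_somField hΛ hae m).eval q).neg).1
      (by rw [integral_neg, integral_somField_eq_zero hΛ hμ hz q, neg_zero])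
  obtain ⟨x, ⟨hx, hcell⟩, hx0⟩ := ((frequently_cellIndex_eq_of_last hμ hm
    (hq0.trans_lt one_pos) hlast).and_eventually hzero).exists
  simp only [somField, hcell, Nat.dist_self, hΛ.map_zero, hq0, Pi.zero_apply] at hx0
  linarith [hq0 ▸ hx.1]

lemma lt_one_of_avgField_eq_zero (i : Fin n) : m i < 1 := by
  refine (hm.2 i).2.lt_of_ne fun hi => ?_
  obtain ⟨q, -, hqi, hfirst⟩ := exists_first_of_block hm.1 i
  have hq1 : m q = 1 := hqi.trans hi
  have hae := ae_mem_Icc_of_support_eq hμ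
  have hnonneg : ∀ᵐ x ∂μ, 0 ≤ somField Λ m x q := hae.mono fun x hx => by
    rw [somField, hq1]
    exact mul_nonneg (hΛ.nonneg _) (sub_nonneg.2 hx.2)
  have hzero : (fun x => somField Λ m x q) =ᵐ[μ] 0 :=
    (integral_eq_zero_iff_of_nonneg_ae hnonneg ((integrable_somField hΛ hae m).eval q)).1
      (integral_somField_eq_zero hΛ hμ hz q)
  obtain ⟨x, ⟨hx, hcell⟩, hx0⟩ := ((frequently_cellIndex_eq_of_first hμ hm
    (hq1 ▸ one_pos) hfirst).and_eventually hzero).exists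
  simp only [somField, hcell, Nat.dist_self, hΛ.map_zero, hq1, Pi.zero_apply] at hx0
  linarith [hq1 ▸ hx.2]

lemma weight_eq_of_avgField_eq_zero [NullSingletonClass μ] {i j k : Fin n} (he : m i = m j)
    (hk : ∃ᶠ x in ae μ, cellIndex m x = k) : Λ (Nat.dist i k) = Λ (Nat.dist j k) := by
  wlog hij : i ≤ j generalizing i j
  · exact (this he.symm (le_of_not_ge hij)).symm
  have hint := integrable_somField hΛ (ae_mem_Icc_of_support_eq hμ) m
  have hzero : (fun x => somField Λ m x i - somField Λ m x j) =ᵐ[μ] 0 :=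
    (integral_eq_zero_iff_of_nonneg
      (fun x => sub_nonneg.2 (somField_anti_of_eq hΛ.antitone hm.1 x hij he))
      ((hint.eval i).sub (hint.eval j))).1 <| by
        rw [integral_sub (hint.eval i) (hint.eval j), integral_somField_eq_zero hΛ hμ hz,
          integral_somField_eq_zero hΛ hμ hz, sub_zero]
  obtain ⟨x, hcell, hx0, hne⟩ := (hk.and_eventually (hzero.and (μ.ae_ne (m i)))).exists
  simp only [somField, hcell, ← he, Pi.zero_apply] at hx0
  exact mul_right_cancel₀ (sub_ne_zero.2 hne.symm) (sub_eq_zero.1 hx0)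

lemma mem_Fplus_of_avgField_eq_zero [NullSingletonClass μ] (hHΛ : HLambda n Λ) :
    m ∈ Fplus n := by
  have hpos := pos_of_avgField_eq_zero hΛ hμ hm hz
  have hlt := lt_one_of_avgField_eq_zero hΛ hμ hm hz
  refine ⟨hm.1.strictMono_of_injective (injective_of_tie hΛ hHΛ hm.1 fun i j k he hk => ?_),
    fun i => ⟨hpos i, hlt i⟩⟩
  rcases hk with hfirst | hlast
  · exact weight_eq_of_avgField_eq_zero hΛ hμ hm hz he
      ((frequently_cellIndex_eq_of_first hμ hm (hpos k) hfirst).mono fun _ => And.right)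
  · exact weight_eq_of_avgField_eq_zero hΛ hμ hm hz he
      ((frequently_cellIndex_eq_of_last hμ hm (hlt k) hlast).mono fun _ => And.right)

end AveragedZeros

end Zeros

section CooperativeField

/-- Along the filter `l`, the path `y` obeys the drift `d`, as far as lower bounds are concerned: if
`d` is bounded away from `0` from below whenever `y ≤ b`, then `y` ends up above every level smaller
than `b`. Upper bounds are obtained by applying this to `1 - y` and `-d`. -/
def FollowsDrift {T : Type*} (l : Filter T) (y d : T → ℝ) : Prop :=
  ∀ ⦃b' b c : ℝ⦄, b' < b → 0 < c → (∀ᶠ t in l, y t ≤ b → c ≤ d t) → ∀ᶠ t in l, b' ≤ y t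

lemma le_of_map_le_of_forall_fixed_eq {α : Type*} [ConditionallyCompleteLattice α]
    [TopologicalSpace α] [T2Space α] [InfConvergenceClass α] {K : Set α} {φ : α → α} {a s : α}
    (hKclosed : IsClosed K) (hKbdd : BddBelow K) (hmaps : MapsTo φ K K) (hmono : MonotoneOn φ K)
    (hcont : ContinuousOn φ K) (hfixed : ∀ m ∈ K, φ m = m → m = s) (ha : a ∈ K) (hle : φ a ≤ a) :
    s ≤ a := by
  have hmem : ∀ k, φ^[k] a ∈ K := fun k => hmaps.iterate k ha
  have hanti : Antitone fun k => φ^[k] a := antitone_nat_of_succ_le fun k => by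
    induction k with
    | zero => exact hle
    | succ k ih =>
      simpa only [Function.iterate_succ_apply'] using hmono (hmem (k + 1)) (hmem k) ih
  have hbdd : BddBelow (range fun k => φ^[k] a) := hKbdd.mono (range_subset_iff.2 hmem)
  have hlim := tendsto_atTop_ciInf hanti hbdd
  have hlimK := hKclosed.mem_of_tendsto hlim (Eventually.of_forall hmem)
  have hfix : φ (⨅ k, φ^[k] a) = ⨅ k, φ^[k] a := by
    refine tendsto_nhds_unique ?_ (hlim.comp (tendsto_add_atTop_nat 1))
    refine ((hcont _ hlimK).tendsto.comp
      (tendsto_nhdsWithin_iff.2 ⟨hlim, Eventually.of_forall hmem⟩)).congr fun k => ?_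
    exact (Function.iterate_succ_apply' φ k a).symm
  exact hfixed _ hlimK hfix ▸ ciInf_le hbdd 0

lemma tendsto_inf_liminf {T α : Type*} [ConditionallyCompleteLinearOrder α] [TopologicalSpace α]
    [OrderTopology α] {l : Filter T} {y : T → α} (hy : l.IsBoundedUnder (· ≥ ·) y) :
    Tendsto (fun t => y t ⊓ liminf y l) l (𝓝 (liminf y l)) := by
  refine tendsto_order.2 ⟨fun b hb => ?_, fun b hb => ?_⟩
  · filter_upwards [eventually_lt_of_lt_liminf hb hy] with t ht using lt_inf_iff.2 ⟨ht, hb⟩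
  · exact Eventually.of_forall fun t => inf_le_right.trans_lt hb

variable {n : ℕ} {h : (Fin n → ℝ) → Fin n → ℝ} {m m' s : Fin n → ℝ}

/-- A vector field on the closed ordered simplex whose full steps `m ↦ m - h m` stay in the simplex
and whose half steps `m ↦ m - h m / 2` preserve the coordinatewise order. -/
structure IsCooperativeField (h : (Fin n → ℝ) → Fin n → ℝ) : Prop where
  continuousOn : ContinuousOn h (orderedSimplex n)
  monotoneOn_half_step : MonotoneOn (fun m => m - (1 / 2 : ℝ) • h m) (orderedSimplex n)
  sub_mem : ∀ m ∈ orderedSimplex n, m - h m ∈ orderedSimplex n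

lemma IsCooperativeField.continuousOn_half_step (H : IsCooperativeField h) :
    ContinuousOn (fun m => m - (1 / 2 : ℝ) • h m) (orderedSimplex n) :=
  continuousOn_id.sub (H.continuousOn.fun_const_smul _)

lemma IsCooperativeField.half_step_mem (H : IsCooperativeField h) (hm : m ∈ orderedSimplex n) :
    m - (1 / 2 : ℝ) • h m ∈ orderedSimplex n := by
  convert convex_orderedSimplex hm (H.sub_mem m hm) one_half_pos.le one_half_pos.le
    (add_halves 1) using 1
  module

lemma IsCooperativeField.le_of_nonneg (H : IsCooperativeField h)
    (hzero : ∀ m ∈ orderedSimplex n, h m = 0 → m = s) (hm : m ∈ orderedSimplex n)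
    (hnonneg : 0 ≤ h m) : s ≤ m := by
  refine le_of_map_le_of_forall_fixed_eq isClosed_orderedSimplex ⟨0, fun m hm i => (hm.2 i).1⟩
    (fun m => H.half_step_mem) H.monotoneOn_half_step H.continuousOn_half_step
    (fun m hm hfix => hzero m hm ?_) hm (sub_le_self m (smul_nonneg one_half_pos.le hnonneg))
  simpa using hfix

lemma inf_mem_orderedSimplex (hm : m ∈ orderedSimplex n) (hm' : m' ∈ orderedSimplex n) :
    m ⊓ m' ∈ orderedSimplex n :=
  ⟨fun _ _ hij => inf_le_inf (hm.1 hij) (hm'.1 hij),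
    fun i => ⟨le_inf (hm.2 i).1 (hm'.2 i).1, inf_le_left.trans (hm.2 i).2⟩⟩

/-- The symmetry of the ordered simplex induced by `x ↦ 1 - x`. -/
def reflect (m : Fin n → ℝ) : Fin n → ℝ := fun i => 1 - m i.rev

/-- The vector field `h` transported by `reflect`. -/
def reflectField (h : (Fin n → ℝ) → Fin n → ℝ) (m : Fin n → ℝ) : Fin n → ℝ :=
  fun i => -h (reflect m) i.rev

lemma reflect_reflect (m : Fin n → ℝ) : reflect (reflect m) = m := by
  ext i
  simp only [reflect, Fin.rev_rev, sub_sub_cancel]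

lemma reflect_le_reflect (hle : m ≤ m') : reflect m' ≤ reflect m :=
  fun i => sub_le_sub_left (hle i.rev) 1

lemma reflect_mem_orderedSimplex (hm : m ∈ orderedSimplex n) : reflect m ∈ orderedSimplex n :=
  ⟨fun _ _ hij => sub_le_sub_left (hm.1 (Fin.rev_le_rev.2 hij)) 1,
    fun i => ⟨sub_nonneg.2 (hm.2 i.rev).2, sub_le_self 1 (hm.2 i.rev).1⟩⟩

lemma continuous_reflect : Continuous (reflect : (Fin n → ℝ) → Fin n → ℝ) := by
  unfold reflect
  fun_prop

lemma sub_smul_reflectField (c : ℝ) (m : Fin n → ℝ) :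
    m - c • reflectField h m = reflect (reflect m - c • h (reflect m)) := by
  ext i
  simp only [reflectField, reflect, Pi.sub_apply, Pi.smul_apply, smul_eq_mul, Fin.rev_rev]
  ring

lemma isCooperativeField_reflectField (H : IsCooperativeField h) :
    IsCooperativeField (reflectField h) where
  continuousOn := by
    have hcomp := H.continuousOn.comp continuous_reflect.continuousOn
      fun m => reflect_mem_orderedSimplex
    exact continuousOn_pi.2 fun i => (continuousOn_pi.1 hcomp i.rev).neg
  monotoneOn_half_step m hm m' hm' hle := by
    simp only [sub_smul_reflectField]
    exact reflect_le_reflect (H.monotoneOn_half_step (reflect_mem_orderedSimplex hm')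
      (reflect_mem_orderedSimplex hm) (reflect_le_reflect hle))
  sub_mem m hm := by
    rw [← one_smul ℝ (reflectField h m), sub_smul_reflectField, one_smul]
    exact reflect_mem_orderedSimplex (H.sub_mem _ (reflect_mem_orderedSimplex hm))

lemma liminf_mem_orderedSimplex {T : Type*} {l : Filter T} [l.NeBot] {u : T → Fin n → ℝ}
    (hu : ∀ᶠ t in l, u t ∈ orderedSimplex n) :
    (fun i => liminf (fun t => u t i) l) ∈ orderedSimplex n := by
  have hbelow : ∀ i, ∀ᶠ t in l, 0 ≤ u t i := fun i => hu.mono fun t ht => (ht.2 i).1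
  have habove : ∀ i, ∀ᶠ t in l, u t i ≤ 1 := fun i => hu.mono fun t ht => (ht.2 i).2
  have hbdd : ∀ i, l.IsBoundedUnder (· ≥ ·) fun t => u t i := fun i =>
    isBoundedUnder_of_eventually_ge (hbelow i)
  have hcobdd : ∀ i, l.IsCoboundedUnder (· ≥ ·) fun t => u t i := fun i =>
    (isBoundedUnder_of_eventually_le (habove i)).isCoboundedUnder_ge
  refine ⟨fun i j hij => ?_, fun i => ⟨?_, ?_⟩⟩
  · exact liminf_le_liminf (hu.mono fun t ht => ht.1 hij) (hbdd i) (hcobdd j)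
  · exact le_liminf_of_le (hcobdd i) (hbelow i)
  · exact liminf_le_of_frequently_le (habove i).frequently (hbdd i)

section Convergence

variable {T : Type*} {l : Filter T} [l.NeBot] {u : T → Fin n → ℝ} (H : IsCooperativeField h)
  (hu : ∀ᶠ t in l, u t ∈ orderedSimplex n)

include H hu in
/- If `h a i < 0` at the liminf `a`, then, since `u ⊓ a ≤ u` and `u ⊓ a → a`, order preservation of
the half step bounds `-h u i` away from `0` as long as `u i` does not exceed `a i` by much; the
drift then pushes `u i` above `a i`. -/
lemma IsCooperativeField.liminf_nonneg
    (hdrift : ∀ i, FollowsDrift l (fun t => u t i) fun t => -h (u t) i) :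
    0 ≤ h fun i => liminf (fun t => u t i) l := by
  intro i
  set a : Fin n → ℝ := fun i => liminf (fun t => u t i) l
  have haK : a ∈ orderedSimplex n := liminf_mem_orderedSimplex hu
  have hlim : Tendsto (fun t => u t ⊓ a) l (𝓝[orderedSimplex n] a) := by
    refine tendsto_nhdsWithin_iff.2 ⟨tendsto_pi_nhds.2 fun j => ?_,
      hu.mono fun t ht => inf_mem_orderedSimplex ht haK⟩
    exact tendsto_inf_liminf
      (isBoundedUnder_of_eventually_ge (hu.mono fun t ht => (ht.2 j).1))
  have hstep := tendsto_pi_nhds.1 ((H.continuousOn_half_step a haK).tendsto.comp hlim) i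
  by_contra! hneg
  obtain ⟨c, hc⟩ : ∃ c, c = -h a i := ⟨_, rfl⟩
  have hcpos : 0 < c := hc ▸ neg_pos.2 hneg
  have hrise : ∀ᶠ t in l, a i + c / 16 ≤ u t i := by
    refine hdrift i (b := a i + c / 8) (c := c / 2) (by linarith) (by linarith) ?_
    filter_upwards [hu, hstep.eventually_const_lt (sub_lt_self _ (by linarith : 0 < c / 8))]
      with t ht hnear hle
    have hmono := H.monotoneOn_half_step (inf_mem_orderedSimplex ht haK) ht inf_le_left i
    simp only [Function.comp_apply, Pi.sub_apply, Pi.smul_apply, smul_eq_mul] at hnear hmono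
    linarith
  have hle : a i + c / 16 ≤ a i :=
    le_liminf_of_le (isBoundedUnder_of_eventually_le
      (hu.mono fun t ht => (ht.2 i).2)).isCoboundedUnder_ge hrise
  linarith

include H hu in
lemma IsCooperativeField.eventually_lt (hzero : ∀ m ∈ orderedSimplex n, h m = 0 → m = s)
    (hdrift : ∀ i, FollowsDrift l (fun t => u t i) fun t => -h (u t) i) {i : Fin n} {b : ℝ}
    (hb : b < s i) : ∀ᶠ t in l, b < u t i := by
  have hle := H.le_of_nonneg hzero (liminf_mem_orderedSimplex hu) (H.liminf_nonneg hu hdrift)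
  exact eventually_lt_of_lt_liminf (hb.trans_le (hle i))
    (isBoundedUnder_of_eventually_ge (hu.mono fun t ht => (ht.2 i).1))

include H hu in
theorem IsCooperativeField.tendsto (hzero : ∀ m ∈ orderedSimplex n, h m = 0 → m = s)
    (hdown : ∀ i, FollowsDrift l (fun t => u t i) fun t => -h (u t) i)
    (hup : ∀ i, FollowsDrift l (fun t => 1 - u t i) fun t => h (u t) i) :
    Tendsto u l (𝓝 s) := by
  refine tendsto_pi_nhds.2 fun i => tendsto_order.2
    ⟨fun b hb => H.eventually_lt hu hzero hdown hb, fun b hb => ?_⟩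
  have hzero' : ∀ m ∈ orderedSimplex n, reflectField h m = 0 → m = reflect s :=
    fun m hm hz => by
      rw [← hzero (reflect m) (reflect_mem_orderedSimplex hm), reflect_reflect]
      ext j
      simpa only [reflectField, Fin.rev_rev, Pi.zero_apply, neg_eq_zero] using
        congrFun hz j.rev
  have hlt := (isCooperativeField_reflectField H).eventually_lt (u := fun t => reflect (u t))
    (i := i.rev) (b := 1 - b)
    (hu.mono fun t => reflect_mem_orderedSimplex) hzero'
    (fun j => by
      simp only [reflectField, reflect_reflect, neg_neg]
      exact hup j.rev)
    (by simpa only [reflect, Fin.rev_rev, sub_lt_sub_iff_left] using hb)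
  simpa only [reflect, Fin.rev_rev, sub_lt_sub_iff_left] using hlt

end Convergence

end CooperativeField

section Drift

variable {b c : ℝ}

lemma tendsto_atTop_of_eventually_le_drift {z d e : ℕ → ℝ} (hc : 0 < c)
    (hz : ∀ t, z (t + 1) = z t + e t * d t) (he : ∀ t, 0 ≤ e t)
    (hediv : Tendsto (fun T => ∑ t ∈ Finset.range T, e t) atTop atTop)
    (hd : ∀ᶠ t in atTop, c ≤ d t) : Tendsto z atTop atTop := by
  obtain ⟨T, hT⟩ := eventually_atTop.1 hd
  have hgrow : ∀ t ≥ T, z T - c * ∑ k ∈ Finset.range T, e k + c * ∑ k ∈ Finset.range t, e k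
      ≤ z t := by
    intro t ht
    induction t, ht using Nat.le_induction with
    | base => linarith
    | succ t ht ih =>
      rw [hz, Finset.sum_range_succ]
      linarith [mul_le_mul_of_nonneg_left (hT t ht) (he t)]
  exact tendsto_atTop_mono' _ (eventually_atTop.2 ⟨T, hgrow⟩)
    (tendsto_atTop_add_const_left _ _ (hediv.const_mul_atTop hc))

lemma followsDrift_of_robbinsMonro {y d e M : ℕ → ℝ} {L : ℝ}
    (hy : ∀ t, y (t + 1) = y t + e t * d t + (M (t + 1) - M t)) (hM : Tendsto M atTop (𝓝 L))
    (he : ∀ t, 0 ≤ e t) (hediv : Tendsto (fun T => ∑ t ∈ Finset.range T, e t) atTop atTop)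
    (hed : Tendsto (fun t => e t * d t) atTop (𝓝 0)) : FollowsDrift atTop y d := by
  intro b' b c hb hc hdrift
  obtain ⟨η, hη⟩ : ∃ η, b' = b - 3 * η := ⟨(b - b') / 3, by ring⟩
  have hηpos : 0 < η := by linarith
  have hz : ∀ t, (y - M) (t + 1) = (y - M) t + e t * d t := fun t => by
    simp only [Pi.sub_apply, hy t]; ring
  have habove : ∃ᶠ t in atTop, b < y t := fun hnot => by
    have hle : ∀ᶠ t in atTop, y t ≤ b := hnot.mono fun t => not_lt.1
    have hzlim := tendsto_atTop_of_eventually_le_drift hc hz he hediv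
      (hdrift.mp (hle.mono fun t ht hd => hd ht))
    have hylim : Tendsto y atTop atTop := by
      simpa only [Pi.sub_apply, sub_add_cancel] using hzlim.atTop_add hM
    obtain ⟨t, hlt, hge⟩ := ((hylim.eventually_gt_atTop b).and hle).exists
    exact hge.not_gt hlt
  obtain ⟨T, hT⟩ := eventually_atTop.1 ((hM.eventually (Ioo_mem_nhds (sub_lt_self L hηpos)
    (lt_add_of_pos_right L hηpos))).and <|
    (hed.eventually_const_lt (neg_lt_zero.2 hηpos)).and hdrift)
  obtain ⟨t₀, ht₀, hyt₀⟩ := frequently_atTop.1 habove T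
  have hinv : ∀ t ≥ t₀, b - L - 2 * η ≤ (y - M) t := by
    intro t ht
    induction t, ht using Nat.le_induction with
    | base =>
      simp only [Pi.sub_apply]
      linarith [(hT t₀ ht₀).1.2]
    | succ t ht ih =>
      obtain ⟨hMt, hedt, hdt⟩ := hT t (ht₀.trans ht)
      rw [hz]
      rcases le_or_gt (y t) b with hle | hgt
      · linarith [mul_nonneg (he t) (hc.le.trans (hdt hle))]
      · simp only [Pi.sub_apply]
        linarith [hMt.2]
  filter_upwards [eventually_ge_atTop t₀] with t ht
  have hzt := hinv t ht
  rw [Pi.sub_apply] at hzt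
  linarith [(hT t (ht₀.trans ht)).1.1]

lemma exists_lt_of_forall_le_deriv {y y' : ℝ → ℝ} {T : ℝ} (hc : 0 < c)
    (hy : ∀ t ≥ T, HasDerivAt y (y' t) t) (hd : ∀ t ≥ T, y t ≤ b → c ≤ y' t) :
    ∃ t ≥ T, b < y t := by
  by_contra! hle
  have hgrow : ∀ t ≥ T, c * (t - T) ≤ y t - y T := fun t ht =>
    (convex_Ici T).mul_sub_le_image_sub_of_le_deriv
      (fun x hx => (hy x hx).continuousAt.continuousWithinAt)
      (fun x hx => (hy x (interior_subset hx)).differentiableAt.differentiableWithinAt)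
      (fun x hx => by
        have hxT : T ≤ x := interior_subset hx
        exact (hy x hxT).deriv ▸ hd x hxT (hle x hxT))
      T self_mem_Ici t ht ht
  have hlim : Tendsto (fun t => c * (t - T)) atTop atTop :=
    (tendsto_atTop_add_const_right _ (-T) tendsto_id).const_mul_atTop hc
  obtain ⟨t, hlt, ht⟩ := ((hlim.eventually_gt_atTop (b - y T)).and (eventually_ge_atTop T)).exists
  linarith [hgrow t ht, hle t ht]

lemma followsDrift_of_hasDerivAt {y y' : ℝ → ℝ} (hy : ∀ᶠ t in atTop, HasDerivAt y (y' t) t) :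
    FollowsDrift atTop y y' := by
  intro b' b c hb hc hdrift
  obtain ⟨T, hT⟩ := eventually_atTop.1 (hy.and hdrift)
  obtain ⟨t₀, ht₀, hyt₀⟩ :=
    exists_lt_of_forall_le_deriv hc (fun t ht => (hT t ht).1) fun t ht => (hT t ht).2
  filter_upwards [eventually_ge_atTop t₀] with t ht
  have hderiv : ∀ x ∈ Icc t₀ t, HasDerivAt y (y' x) x := fun x hx => (hT x (ht₀.trans hx.1)).1
  have hbarrier := image_le_of_deriv_right_lt_deriv_boundary (f := -y) (f' := fun x => -y' x)
    (B := fun _ => -b) (B' := 0)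
    (fun x hx => (hderiv x hx).neg.continuousAt.continuousWithinAt)
    (fun x hx => (hderiv x (Ico_subset_Icc_self hx)).neg.hasDerivWithinAt)
    (neg_le_neg hyt₀.le) (fun x => hasDerivAt_const x (-b))
    (fun x hx hxb => by
      have hcy := (hT x (ht₀.trans hx.1)).2 (neg_injective hxb).le
      simp only [Pi.zero_apply]
      linarith) (right_mem_Icc.2 ht)
  exact hb.le.trans (neg_le_neg_iff.1 hbarrier)

end Drift

section MeanFlow

lemma forall_mem_of_forall_mem_Ico {E : Type*} [TopologicalSpace E] {g : ℝ → E} {U : Set E}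
    {a : ℝ} (hU : IsOpen U) (hg : ContinuousOn g (Ici a))
    (hstep : ∀ τ ≥ a, (∀ t ∈ Ico a τ, g t ∈ U) → g τ ∈ U) : ∀ t ≥ a, g t ∈ U := by
  by_contra! hexit
  have hclosed : IsClosed (Ici a ∩ g ⁻¹' Uᶜ) :=
    hg.preimage_isClosed_of_isClosed isClosed_Ici hU.isClosed_compl
  have hbdd : BddBelow (Ici a ∩ g ⁻¹' Uᶜ) := bddBelow_Ici.mono inter_subset_left
  obtain ⟨hτ, hout⟩ := hclosed.csInf_mem hexit hbdd
  refine hout (hstep _ hτ fun t ht => ?_)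
  by_contra hmem
  exact (csInf_le hbdd ⟨ht.1, hmem⟩).not_gt ht.2

lemma pos_of_neg_le_deriv {d d' : ℝ → ℝ} {a b : ℝ} (hab : a ≤ b)
    (hcont : ContinuousOn d (Icc a b)) (hderiv : ∀ t ∈ Ioo a b, HasDerivAt d (d' t) t)
    (hle : ∀ t ∈ Ioo a b, -d t ≤ d' t) (ha : 0 < d a) : 0 < d b := by
  have hderiv' : ∀ t ∈ Ioo a b,
      HasDerivAt (fun t => Real.exp t * d t) (Real.exp t * (d t + d' t)) t := fun t ht => by
    simpa only [mul_add] using (Real.hasDerivAt_exp t).fun_mul (hderiv t ht)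
  have hmono : MonotoneOn (fun t => Real.exp t * d t) (Icc a b) := by
    refine monotoneOn_of_deriv_nonneg (convex_Icc a b) (Real.continuous_exp.continuousOn.mul hcont)
      ?_ ?_ <;> rw [interior_Icc]
    · exact fun t ht => (hderiv' t ht).differentiableAt.differentiableWithinAt
    · intro t ht
      rw [(hderiv' t ht).deriv]
      exact mul_nonneg (Real.exp_pos t).le (neg_le_iff_add_nonneg'.1 (hle t ht))
  refine pos_of_mul_pos_right ?_ (Real.exp_pos b).le
  exact (mul_pos (Real.exp_pos a) ha).trans_le
    (hmono (left_mem_Icc.2 hab) (right_mem_Icc.2 hab) hab)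

variable {n : ℕ} {h : (Fin n → ℝ) → Fin n → ℝ} {g : ℝ → Fin n → ℝ}

lemma mem_Fplus_of_hasDerivAt (hsub : ∀ m ∈ Fplus n, m - h m ∈ orderedSimplex n)
    (hg0 : g 0 ∈ Fplus n) (hcont : ContinuousOn g (Ici 0))
    (hderiv : ∀ t > 0, HasDerivAt g (-h (g t)) t) : ∀ t ≥ 0, g t ∈ Fplus n := by
  refine forall_mem_of_forall_mem_Ico isOpen_Fplus hcont fun τ hτ hbefore => ?_
  have hcoord : ∀ i, ContinuousOn (fun t => g t i) (Icc 0 τ) := fun i =>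
    continuousOn_pi.1 (hcont.mono Icc_subset_Ici_self) i
  have hcoord' : ∀ i, ∀ t ∈ Ioo 0 τ, HasDerivAt (fun t => g t i) (-h (g t) i) t :=
    fun i t ht => hasDerivAt_pi.1 (hderiv t ht.1) i
  have hstep : ∀ t ∈ Ioo 0 τ, g t - h (g t) ∈ orderedSimplex n := fun t ht =>
    hsub _ (hbefore t (Ioo_subset_Ico_self ht))
  refine ⟨fun i j hij => sub_pos.1 ?_, fun i => ⟨?_, sub_pos.1 ?_⟩⟩
  · refine pos_of_neg_le_deriv (d := fun t => g t j - g t i) hτ ((hcoord j).sub (hcoord i))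
      (fun t ht => (hcoord' j t ht).sub (hcoord' i t ht)) (fun t ht => ?_) (sub_pos.2 (hg0.1 hij))
    have hle := (hstep t ht).1 hij.le
    simp only [Pi.sub_apply] at hle ⊢
    linarith
  · refine pos_of_neg_le_deriv hτ (hcoord i) (hcoord' i) (fun t ht => ?_) (hg0.2 i).1
    have hle := ((hstep t ht).2 i).1
    rw [Pi.sub_apply] at hle
    linarith
  · refine pos_of_neg_le_deriv (d := fun t => 1 - g t i) hτ (continuousOn_const.sub (hcoord i))
      (fun t ht => (hcoord' i t ht).const_sub 1) (fun t ht => ?_) (sub_pos.2 (hg0.2 i).2)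
    have hle := ((hstep t ht).2 i).2
    rw [Pi.sub_apply] at hle
    linarith

theorem IsCooperativeField.tendsto_of_hasDerivAt {s : Fin n → ℝ} (H : IsCooperativeField h)
    (hzero : ∀ m ∈ orderedSimplex n, h m = 0 → m = s) (hg0 : g 0 ∈ Fplus n)
    (hcont : ContinuousOn g (Ici 0)) (hderiv : ∀ t > 0, HasDerivAt g (-h (g t)) t) :
    Tendsto g atTop (𝓝 s) := by
  have hmem := mem_Fplus_of_hasDerivAt (fun m hm => H.sub_mem m (Fplus_subset_orderedSimplex hm))
    hg0 hcont hderiv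
  have hcoord : ∀ i, ∀ᶠ t in atTop, HasDerivAt (fun t => g t i) (-h (g t) i) t := fun i =>
    (eventually_gt_atTop 0).mono fun t ht => hasDerivAt_pi.1 (hderiv t ht) i
  refine H.tendsto ?_ hzero (fun i => followsDrift_of_hasDerivAt (hcoord i)) fun i => ?_
  · filter_upwards [eventually_ge_atTop 0] with t ht using Fplus_subset_orderedSimplex (hmem t ht)
  · refine followsDrift_of_hasDerivAt ((hcoord i).mono fun t ht => ?_)
    simpa only [neg_neg] using ht.const_sub 1

end MeanFlow

section Noise

variable {Ω : Type*} {𝓂 mΩ : MeasurableSpace Ω} {P : Measure Ω}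

lemma integral_sum_range_sq_of_condExp_eq_zero [IsFiniteMeasure P] {ℱ : Filtration ℕ mΩ}
    {ξ : ℕ → Ω → ℝ} (hmeas : ∀ t, StronglyMeasurable[ℱ (t + 1)] (ξ t))
    (hL2 : ∀ t, MemLp (ξ t) 2 P) (hcond : ∀ t, P[ξ t | ℱ t] =ᵐ[P] 0) (T : ℕ) :
    ∫ ω, (∑ t ∈ Finset.range T, ξ t ω) ^ 2 ∂P
      = ∑ t ∈ Finset.range T, ∫ ω, ξ t ω ^ 2 ∂P := by
  induction T with
  | zero => simp
  | succ T ih =>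
    set S : Ω → ℝ := fun ω => ∑ t ∈ Finset.range T, ξ t ω
    have hSL2 : MemLp S 2 P := memLp_finsetSum _ fun t _ => hL2 t
    have hSmeas : StronglyMeasurable[ℱ T] S :=
      Finset.stronglyMeasurable_fun_sum _ fun t ht =>
        (hmeas t).mono (ℱ.mono (Finset.mem_range.1 ht))
    have hSξ : Integrable (S * ξ T) P := hSL2.integrable_mul (hL2 T)
    have horth : ∫ ω, (S * ξ T) ω ∂P = 0 := by
      rw [← integral_condExp (ℱ.le T)]
      refine integral_eq_zero_of_ae ?_
      filter_upwards [condExp_mul_of_stronglyMeasurable_left hSmeas hSξ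
        ((hL2 T).integrable one_le_two), hcond T] with ω hmul hzero
      simp only [hmul, Pi.mul_apply, hzero, Pi.zero_apply, mul_zero]
    calc ∫ ω, (∑ t ∈ Finset.range (T + 1), ξ t ω) ^ 2 ∂P
        = ∫ ω, S ω ^ 2 + 2 * (S * ξ T) ω + ξ T ω ^ 2 ∂P := by
          simp only [Finset.sum_range_succ, add_sq, S, Pi.mul_apply, mul_assoc]
      _ = ∫ ω, S ω ^ 2 ∂P + 2 * ∫ ω, (S * ξ T) ω ∂P + ∫ ω, ξ T ω ^ 2 ∂P := by
          rw [integral_add (hSL2.integrable_sq.fun_add (hSξ.const_mul 2)) (hL2 T).integrable_sq,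
            integral_add hSL2.integrable_sq (hSξ.const_mul 2), integral_const_mul]
      _ = ∑ t ∈ Finset.range (T + 1), ∫ ω, ξ t ω ^ 2 ∂P := by
          rw [horth, mul_zero, add_zero, ih, Finset.sum_range_succ]

lemma eLpNorm_one_le_of_memLp_two [IsFiniteMeasure P] {S : Ω → ℝ} (hS : MemLp S 2 P) :
    eLpNorm S 1 P ≤ ENNReal.ofReal (P.real univ + ∫ ω, S ω ^ 2 ∂P) := by
  have hint := hS.integrable one_le_two
  rw [eLpNorm_one_eq_lintegral_enorm, ← ofReal_integral_norm_eq_lintegral_enorm hint]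
  refine ENNReal.ofReal_le_ofReal ?_
  calc ∫ ω, ‖S ω‖ ∂P ≤ ∫ ω, 1 + S ω ^ 2 ∂P := by
        refine integral_mono hint.norm ((integrable_const 1).add hS.integrable_sq) fun ω => ?_
        simp only [Real.norm_eq_abs, ← sq_abs (S ω)]
        nlinarith [sq_nonneg (|S ω| - 1), abs_nonneg (S ω)]
    _ = P.real univ + ∫ ω, S ω ^ 2 ∂P := by
        rw [integral_add (integrable_const 1) hS.integrable_sq, integral_const, smul_eq_mul,
          mul_one]

theorem ae_exists_tendsto_sum_of_condExp_eq_zero [IsFiniteMeasure P] {ℱ : Filtration ℕ mΩ}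
    {ξ : ℕ → Ω → ℝ} (hmeas : ∀ t, StronglyMeasurable[ℱ (t + 1)] (ξ t))
    (hL2 : ∀ t, MemLp (ξ t) 2 P) (hcond : ∀ t, P[ξ t | ℱ t] =ᵐ[P] 0)
    (hsum : Summable fun t => ∫ ω, ξ t ω ^ 2 ∂P) :
    ∀ᵐ ω ∂P, ∃ L, Tendsto (fun T => ∑ t ∈ Finset.range T, ξ t ω) atTop (𝓝 L) := by
  have hSL2 : ∀ T, MemLp (fun ω => ∑ t ∈ Finset.range T, ξ t ω) 2 P := fun T =>
    memLp_finsetSum _ fun t _ => hL2 t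
  have hmart : Martingale (fun T ω => ∑ t ∈ Finset.range T, ξ t ω) ℱ P := by
    refine martingale_of_condExp_sub_eq_zero_nat (fun T => ?_)
      (fun T => (hSL2 T).integrable one_le_two) fun T => ?_
    · exact Finset.stronglyMeasurable_fun_sum _ fun t ht =>
        (hmeas t).mono (ℱ.mono (Finset.mem_range.1 ht))
    · convert hcond T using 2
      ext ω
      simp only [Pi.sub_apply, Finset.sum_range_succ, add_sub_cancel_left]
  refine hmart.submartingale.exists_ae_tendsto_of_bdd
    (R := (P.real univ + ∑' t, ∫ ω, ξ t ω ^ 2 ∂P).toNNReal) fun T => ?_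
  refine (eLpNorm_one_le_of_memLp_two (hSL2 T)).trans (ENNReal.ofReal_le_ofReal ?_)
  rw [integral_sum_range_sq_of_condExp_eq_zero hmeas hL2 hcond]
  gcongr
  exact hsum.sum_le_tsum _ fun t _ => integral_nonneg fun ω => sq_nonneg _

lemma condExp_prod_ae_eq_integral_of_indepFun [IsFiniteMeasure P] {E S : Type*}
    {mE : MeasurableSpace E} [MeasurableSpace S] [StandardBorelSpace S] [Nonempty S] {V : Ω → E}
    {Y : Ω → S} (hV : Measurable V) (hY : Measurable Y) (hindep : IndepFun V Y P) {G : E × S → ℝ}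
    (hG : StronglyMeasurable G) (hint : Integrable (fun ω => G (V ω, Y ω)) P) :
    P[fun ω => G (V ω, Y ω) | mE.comap V] =ᵐ[P] fun ω => ∫ x, G (V ω, x) ∂(P.map Y) := by
  have hfrozen : condDistrib Y V P =ᵐ[P.map V] Kernel.const E (P.map Y) := by
    refine condDistrib_ae_eq_of_measure_eq_compProd V hY.aemeasurable ?_
    rw [Measure.compProd_const]
    exact (indepFun_iff_map_prod_eq_prod_map_map hV.aemeasurable hY.aemeasurable).1 hindep
  filter_upwards [condExp_prod_ae_eq_integral_condDistrib hV hY.aemeasurable hG hint,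
    ae_of_ae_map hV.aemeasurable hfrozen] with ω hcond hconst
  rw [hcond, hconst, Kernel.const_apply]

lemma condExp_prod_ae_eq_integral_of_indep [IsFiniteMeasure P] {E S : Type*}
    [MeasurableSpace E] [MeasurableSpace S] [StandardBorelSpace S] [Nonempty S]
    (h𝓂 : 𝓂 ≤ mΩ) {V : Ω → E} {Y : Ω → S} (hV : Measurable[𝓂] V)
    (hY : Measurable Y) (hindep : Indep 𝓂 (MeasurableSpace.comap Y inferInstance) P)
    {G : E × S → ℝ} (hG : Measurable G) (hint : Integrable (fun ω => G (V ω, Y ω)) P) :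
    P[fun ω => G (V ω, Y ω) | 𝓂] =ᵐ[P] fun ω => ∫ x, G (V ω, x) ∂(P.map Y) := by
  have hid : Measurable[mΩ, 𝓂] (id : Ω → Ω) := measurable_id'' h𝓂
  have hindepId : Indep (𝓂.comap id) (MeasurableSpace.comap Y inferInstance) P := by
    rwa [MeasurableSpace.comap_id]
  have hG' : Measurable[𝓂.prod inferInstance] fun p : Ω × S => G (V p.1, p.2) :=
    hG.comp ((hV.comp measurable_fst).prodMk measurable_snd)
  have hcond := condExp_prod_ae_eq_integral_of_indepFun (mE := 𝓂) hid hY hindepId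
    hG'.stronglyMeasurable hint
  rwa [MeasurableSpace.comap_id] at hcond

theorem ae_exists_tendsto_sum_of_indep [IsFiniteMeasure P] {E S : Type*} [MeasurableSpace E]
    [MeasurableSpace S] [StandardBorelSpace S] [Nonempty S] {ℱ : Filtration ℕ mΩ} {V : ℕ → Ω → E}
    {Y : ℕ → Ω → S} {G : ℕ → E × S → ℝ} {c : ℕ → ℝ} (hV : ∀ t, Measurable[ℱ t] (V t))
    (hY : ∀ t, Measurable[ℱ (t + 1)] (Y t))
    (hindep : ∀ t, Indep (ℱ t) (MeasurableSpace.comap (Y t) inferInstance) P)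
    (hG : ∀ t, Measurable (G t)) (hmean : ∀ t v, ∫ y, G t (v, y) ∂(P.map (Y t)) = 0)
    (hbound : ∀ t, ∀ᵐ ω ∂P, |G t (V t ω, Y t ω)| ≤ c t) (hc : Summable fun t => c t ^ 2) :
    ∀ᵐ ω ∂P, ∃ L, Tendsto (fun T => ∑ t ∈ Finset.range T, G t (V t ω, Y t ω)) atTop (𝓝 L) := by
  have hmeas : ∀ t, Measurable[ℱ (t + 1)] fun ω => G t (V t ω, Y t ω) := fun t =>
    (hG t).comp (((hV t).mono (ℱ.mono t.le_succ) le_rfl).prodMk (hY t))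
  have hL2 : ∀ t, MemLp (fun ω => G t (V t ω, Y t ω)) 2 P := fun t =>
    MemLp.of_bound ((hmeas t).mono (ℱ.le _) le_rfl).aestronglyMeasurable (c t) (hbound t)
  refine ae_exists_tendsto_sum_of_condExp_eq_zero (fun t => (hmeas t).stronglyMeasurable) hL2
    (fun t => ?_) ((hc.mul_left (P.real univ)).of_nonneg_of_le
      (fun t => integral_nonneg fun ω => sq_nonneg _) fun t => ?_)
  · refine (condExp_prod_ae_eq_integral_of_indep (ℱ.le t) (hV t) ((hY t).mono (ℱ.le _) le_rfl)
      (hindep t) (hG t) ((hL2 t).integrable one_le_two)).trans (Eventually.of_forall fun ω => ?_)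
    exact hmean t (V t ω)
  · calc ∫ ω, G t (V t ω, Y t ω) ^ 2 ∂P ≤ ∫ _, c t ^ 2 ∂P := by
          refine integral_mono_ae (hL2 t).integrable_sq (integrable_const _) ?_
          filter_upwards [hbound t] with ω hω using sq_le_sq.2 (hω.trans (le_abs_self _))
      _ = P.real univ * c t ^ 2 := by rw [integral_const, smul_eq_mul]

end Noise

section StepNoise

variable {n : ℕ} {Λ : ℕ → ℝ} {μ : Measure ℝ} {m : Fin n → ℝ} {x : ℝ}

/-- The deviation of the displacement caused by the input `x` from its mean, with the sign it has in
the SOM step. -/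
def somNoise (Λ : ℕ → ℝ) (μ : Measure ℝ) (m : Fin n → ℝ) (x : ℝ) : Fin n → ℝ :=
  avgField Λ μ m - somField Λ m x

lemma abs_le_one_of_sub_mem_orderedSimplex {v : Fin n → ℝ} (hm : m ∈ orderedSimplex n)
    (hv : m - v ∈ orderedSimplex n) (i : Fin n) : |v i| ≤ 1 := by
  have hmv := hv.2 i
  rw [Pi.sub_apply] at hmv
  exact abs_le.2 ⟨by linarith [(hm.2 i).1, hmv.2], by linarith [(hm.2 i).2, hmv.1]⟩

lemma measurable_somNoise [SFinite μ] (Λ : ℕ → ℝ) :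
    Measurable fun p : (Fin n → ℝ) × ℝ => somNoise Λ μ p.1 p.2 := by
  have havg : Measurable (avgField Λ μ : (Fin n → ℝ) → Fin n → ℝ) :=
    (measurable_somField Λ).stronglyMeasurable.integral_prod_right'.measurable
  exact (havg.comp measurable_fst).sub (measurable_somField Λ)

variable [IsProbabilityMeasure μ] (hΛ : IsNeighborhoodFunction Λ)
  (hμ : ∀ᵐ x ∂μ, x ∈ Icc (0 : ℝ) 1)

include hΛ hμ

lemma abs_avgField_le_one (hm : m ∈ orderedSimplex n) (i : Fin n) : |avgField Λ μ m i| ≤ 1 :=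
  abs_le_one_of_sub_mem_orderedSimplex hm (sub_avgField_mem_orderedSimplex hΛ hμ hm) i

lemma abs_somNoise_le (hm : m ∈ orderedSimplex n) (hx : x ∈ Icc (0 : ℝ) 1) (i : Fin n) :
    |somNoise Λ μ m x i| ≤ 2 := by
  have havg := abs_avgField_le_one hΛ hμ hm i
  have hfield := abs_le_one_of_sub_mem_orderedSimplex hm
    (sub_somField_mem_orderedSimplex hΛ hm hx) i
  exact (abs_sub _ _).trans (by linarith)

lemma integral_somNoise_eq_zero (m : Fin n → ℝ) (i : Fin n) : ∫ x, somNoise Λ μ m x i ∂μ = 0 := by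
  simp only [somNoise, Pi.sub_apply]
  rw [integral_sub (integrable_const _) ((integrable_somField hΛ hμ m).eval i),
    ← avgField_apply hΛ hμ m i, integral_const, probReal_univ, one_smul, sub_self]

end StepNoise

section SomTrajectory

variable {n : ℕ} [NeZero n] {Λ : ℕ → ℝ} {μ : Measure ℝ} {m0 : Fin n → ℝ} {ε : ℕ → ℝ}
  {Ω : Type*} {mΩ : MeasurableSpace Ω} {P : Measure Ω} {X : ℕ → Ω → ℝ}

lemma somProc_succ (Λ ε : ℕ → ℝ) (X : ℕ → Ω → ℝ) (m0 : Fin n → ℝ) (t : ℕ) (ω : Ω) :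
    somProc Λ ε X m0 (t + 1) ω
      = somUpdate Λ (ε (t + 1)) (somProc Λ ε X m0 t ω) (X (t + 1) ω) :=
  rfl

lemma measurable_somProc {ℱ : Filtration ℕ mΩ} (hX : ∀ t, Measurable[ℱ t] (X t)) (Λ ε : ℕ → ℝ)
    (m0 : Fin n → ℝ) (t : ℕ) : Measurable[ℱ t] (somProc Λ ε X m0 t) := by
  induction t with
  | zero => exact @measurable_const _ _ _ (ℱ 0) m0
  | succ t ih =>
    exact (measurable_somUpdate Λ (ε (t + 1))).comp
      ((ih.mono (ℱ.mono t.le_succ) le_rfl).prodMk (hX (t + 1)))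

section Path

variable {ω : Ω} (hΛ : IsNeighborhoodFunction Λ) (hε : ∀ t, ε t ∈ Ico (0 : ℝ) 1)
  (hX : ∀ t, X t ω ∈ Icc (0 : ℝ) 1) (hm0 : m0 ∈ Fplus n)

include hΛ hε hX hm0

lemma somProc_mem_Fplus (t : ℕ) : somProc Λ ε X m0 t ω ∈ Fplus n := by
  induction t with
  | zero => exact hm0
  | succ t ih =>
    rw [somProc_succ, somUpdate_eq_sub_smul_somField ih.1]
    exact sub_smul_mem_Fplus ih (sub_somField_mem_orderedSimplex hΛ
      (Fplus_subset_orderedSimplex ih) (hX (t + 1))) (hε (t + 1))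

lemma somProc_succ_apply (μ : Measure ℝ) (t : ℕ) (i : Fin n) :
    somProc Λ ε X m0 (t + 1) ω i = somProc Λ ε X m0 t ω i
      + ε (t + 1) * -avgField Λ μ (somProc Λ ε X m0 t ω) i
      + ε (t + 1) * somNoise Λ μ (somProc Λ ε X m0 t ω) (X (t + 1) ω) i := by
  rw [somProc_succ, somUpdate_eq_sub_smul_somField (somProc_mem_Fplus hΛ hε hX hm0 t).1]
  simp only [somNoise, Pi.sub_apply, Pi.smul_apply, smul_eq_mul]
  ring

lemma tendsto_somProc_of_tendsto_noise [IsProbabilityMeasure μ]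
    (hμ : ∀ᵐ x ∂μ, x ∈ Icc (0 : ℝ) 1) {s : Fin n → ℝ}
    (H : IsCooperativeField (avgField Λ μ : (Fin n → ℝ) → Fin n → ℝ))
    (hzero : ∀ m ∈ orderedSimplex n, avgField Λ μ m = 0 → m = s)
    (hεdiv : Tendsto (fun T => ∑ t ∈ Finset.range T, ε (t + 1)) atTop atTop)
    (hεlim : Tendsto (fun t => ε (t + 1)) atTop (𝓝 0))
    (hnoise : ∀ i, ∃ L, Tendsto (fun T => ∑ t ∈ Finset.range T,
      ε (t + 1) * somNoise Λ μ (somProc Λ ε X m0 t ω) (X (t + 1) ω) i) atTop (𝓝 L)) :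
    Tendsto (fun t => somProc Λ ε X m0 t ω) atTop (𝓝 s) := by
  have hmem : ∀ t, somProc Λ ε X m0 t ω ∈ orderedSimplex n := fun t =>
    Fplus_subset_orderedSimplex (somProc_mem_Fplus hΛ hε hX hm0 t)
  have hrec := somProc_succ_apply hΛ hε hX hm0 μ
  have hdrift : ∀ i, Tendsto (fun t => ε (t + 1) * avgField Λ μ (somProc Λ ε X m0 t ω) i)
      atTop (𝓝 0) := fun i => by
    simpa only [mul_comm] using bdd_le_mul_tendsto_zero' 1
      (Eventually.of_forall fun t => abs_avgField_le_one hΛ hμ (hmem t) i) hεlim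
  refine H.tendsto (Eventually.of_forall hmem) hzero (fun i => ?_) fun i => ?_ <;>
    obtain ⟨L, hL⟩ := hnoise i
  · refine followsDrift_of_robbinsMonro (fun t => ?_) hL (fun t => (hε (t + 1)).1) hεdiv ?_
    · rw [hrec, Finset.sum_range_succ, add_sub_cancel_left]
    · simpa only [mul_neg, neg_zero] using (hdrift i).neg
  · refine followsDrift_of_robbinsMonro (fun t => ?_) hL.neg (fun t => (hε (t + 1)).1) hεdiv
      (hdrift i)
    rw [hrec, Finset.sum_range_succ]
    ring

end Path

lemma ae_forall_mem_of_map_eq {S : Type*} [MeasurableSpace S] {ν : Measure S} {Y : ℕ → Ω → S}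
    {A : Set S} (hY : ∀ t, Measurable (Y t)) (hlaw : ∀ t, P.map (Y t) = ν) (hA : ∀ᵐ x ∂ν, x ∈ A) :
    ∀ᵐ ω ∂P, ∀ t, Y t ω ∈ A :=
  ae_all_iff.2 fun t => ae_of_ae_map (hY t).aemeasurable (hlaw t ▸ hA)

lemma ae_exists_tendsto_sum_somNoise [IsProbabilityMeasure μ]
    (hΛ : IsNeighborhoodFunction Λ) (hμ : ∀ᵐ x ∂μ, x ∈ Icc (0 : ℝ) 1)
    (hε : ∀ t, ε t ∈ Ico (0 : ℝ) 1) (hεsq : Summable fun t => ε (t + 1) ^ 2)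
    (hXmeas : ∀ t, Measurable (X t)) (hXlaw : ∀ t, P.map (X t) = μ) (hXindep : iIndepFun X P)
    (hm0 : m0 ∈ Fplus n) (i : Fin n) :
    ∀ᵐ ω ∂P, ∃ L, Tendsto (fun T => ∑ t ∈ Finset.range T,
      ε (t + 1) * somNoise Λ μ (somProc Λ ε X m0 t ω) (X (t + 1) ω) i) atTop (𝓝 L) := by
  have := hXindep.isProbabilityMeasure
  have hXadapted := Filtration.stronglyAdapted_natural fun t => (hXmeas t).stronglyMeasurable
  have hmeas : Measurable fun p : (Fin n → ℝ) × ℝ => somNoise Λ μ p.1 p.2 i :=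
    (measurable_pi_apply i).comp (measurable_somNoise Λ)
  refine ae_exists_tendsto_sum_of_indep (G := fun t p => ε (t + 1) * somNoise Λ μ p.1 p.2 i)
    (c := fun t => ε (t + 1) * 2) (Y := fun t => X (t + 1))
    (measurable_somProc (fun t => (hXadapted t).measurable) Λ ε m0)
    (fun t => (hXadapted (t + 1)).measurable)
    (fun t => (hXindep.indep_comap_natural_of_lt _ t.lt_succ_self).symm)
    (fun t => hmeas.const_mul _) (fun t v => ?_) (fun t => ?_) ?_
  · rw [integral_const_mul, hXlaw, integral_somNoise_eq_zero hΛ hμ, mul_zero]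
  · filter_upwards [ae_forall_mem_of_map_eq hXmeas hXlaw hμ] with ω hω
    have hmem := Fplus_subset_orderedSimplex (somProc_mem_Fplus hΛ hε hω hm0 t)
    rw [abs_mul, abs_of_nonneg (hε (t + 1)).1]
    exact mul_le_mul_of_nonneg_left (abs_somNoise_le hΛ hμ hmem (hω (t + 1)) i) (hε (t + 1)).1
  · simpa only [mul_pow] using hεsq.mul_right (2 ^ 2)

theorem ae_tendsto_somProc [IsProbabilityMeasure μ] {s : Fin n → ℝ}
    (hΛ : IsNeighborhoodFunction Λ) (hμ : ∀ᵐ x ∂μ, x ∈ Icc (0 : ℝ) 1)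
    (H : IsCooperativeField (avgField Λ μ : (Fin n → ℝ) → Fin n → ℝ))
    (hzero : ∀ m ∈ orderedSimplex n, avgField Λ μ m = 0 → m = s)
    (hε : ∀ t, ε t ∈ Ico (0 : ℝ) 1)
    (hεdiv : Tendsto (fun T => ∑ t ∈ Finset.range T, ε t) atTop atTop)
    (hεsq : Summable fun t => ε t ^ 2)
    (hXmeas : ∀ t, Measurable (X t)) (hXlaw : ∀ t, P.map (X t) = μ) (hXindep : iIndepFun X P)
    (hm0 : m0 ∈ Fplus n) :
    ∀ᵐ ω ∂P, Tendsto (fun t => somProc Λ ε X m0 t ω) atTop (𝓝 s) := by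
  have hεlim : Tendsto ε atTop (𝓝 0) := by
    simpa only [Real.sqrt_sq (hε _).1, Real.sqrt_zero] using hεsq.tendsto_atTop_zero.sqrt
  have hεdiv' : Tendsto (fun T => ∑ t ∈ Finset.range T, ε (t + 1)) atTop atTop := by
    refine (tendsto_atTop_add_const_right _ (-ε 0)
      (hεdiv.comp (tendsto_add_atTop_nat 1))).congr fun T => ?_
    rw [Function.comp_apply, Finset.sum_range_succ', add_neg_cancel_right]
  filter_upwards [ae_forall_mem_of_map_eq hXmeas hXlaw hμ,
    ae_all_iff.2 (ae_exists_tendsto_sum_somNoise hΛ hμ hε ((summable_nat_add_iff 1).2 hεsq)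
      hXmeas hXlaw hXindep hm0)] with ω hX hnoise
  exact tendsto_somProc_of_tendsto_noise hΛ hε hX hm0 hμ H hzero hεdiv'
    (hεlim.comp (tendsto_add_atTop_nat 1)) hnoise

end SomTrajectory

section Density

variable {f : ℝ → ℝ} {a b : ℝ}

lemma ae_eq_indicator_Ioo (hsupp : ∀ x, x ∉ Icc a b → f x = 0) :
    f =ᵐ[volume] (Ioo a b).indicator f := by
  have hself : (Icc a b).indicator f = f :=
    indicator_eq_self.2 fun x hx => by_contra fun hxI => hx (hsupp x hxI)
  simpa only [hself] using
    (indicator_ae_eq_of_ae_eq_set (f := f) (Ioo_ae_eq_Icc (μ := volume) (a := a) (b := b))).symm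

lemma support_withDensity_ofReal_eq_Icc (hab : a < b) (hf : AEMeasurable f)
    (hpos : ∀ x ∈ Ioo a b, 0 < f x) (hsupp : ∀ x, x ∉ Icc a b → f x = 0) :
    (volume.withDensity fun x => ENNReal.ofReal (f x)).support = Icc a b := by
  refine subset_antisymm (Measure.support_subset_of_isClosed isClosed_Icc ?_) ?_
  · rw [mem_ae_iff, withDensity_apply_eq_zero' hf.ennreal_ofReal]
    convert measure_empty (μ := (volume : Measure ℝ))
    refine eq_empty_of_forall_notMem fun x hx => hx.1 ?_
    rw [hsupp x hx.2, ENNReal.ofReal_zero]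
  · rw [← closure_Ioo hab.ne]
    refine closure_minimal (fun x hx => ?_) Measure.isClosed_support
    refine (Measure.mem_support_iff_forall x).2 fun U hU => pos_iff_ne_zero.2 fun hzero => ?_
    rw [withDensity_apply_eq_zero' hf.ennreal_ofReal] at hzero
    refine (Measure.measure_pos_of_mem_nhds volume (inter_mem (isOpen_Ioo.mem_nhds hx) hU)).ne'
      (measure_mono_null (inter_subset_inter_left U fun y hy => ?_) hzero)
    exact (ENNReal.ofReal_pos.2 (hpos y hy)).ne'

lemma meanField_eq_measureMeanField {n : ℕ} (hf : AEMeasurable f) (hf0 : 0 ≤ᵐ[volume] f)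
    (Λ : ℕ → ℝ) (m : Fin n → ℝ) :
    meanField Λ f m
      = measureMeanField Λ (volume.withDensity fun x => ENNReal.ofReal (f x)) m := by
  ext i
  simp only [meanField, measureMeanField]
  refine Finset.sum_congr rfl fun j _ => ?_
  rw [setIntegral_withDensity_eq_setIntegral_toReal_smul₀ hf.ennreal_ofReal.restrict
    (Eventually.of_forall fun x => ENNReal.ofReal_lt_top) _ measurableSet_Icc]
  congr 1
  refine integral_congr_ae ?_
  filter_upwards [ae_restrict_of_ae hf0] with x hx
  rw [ENNReal.toReal_ofReal hx, smul_eq_mul, mul_comm]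

lemma Hmu.continuousOn (h : Hmu f) : ContinuousOn f (Ioo 0 1) := by
  have hlog : ContinuousOn (fun x => Real.log (f x)) (Ioo 0 1) :=
    (h.2.elim StrictConcaveOn.concaveOn And.left).continuousOn isOpen_Ioo
  exact (Real.continuous_exp.comp_continuousOn hlog).congr fun x hx =>
    (Real.exp_log (h.1 x hx)).symm

lemma Hmu.aemeasurable (h : Hmu f) (hsupp : ∀ x, x ∉ Icc (0 : ℝ) 1 → f x = 0) :
    AEMeasurable f :=
  ((aemeasurable_indicator_iff measurableSet_Ioo).2
    (h.continuousOn.aemeasurable measurableSet_Ioo)).congr (ae_eq_indicator_Ioo hsupp).symm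

lemma Hmu.ae_nonneg (h : Hmu f) (hsupp : ∀ x, x ∉ Icc (0 : ℝ) 1 → f x = 0) :
    0 ≤ᵐ[volume] f := by
  filter_upwards [ae_eq_indicator_Ioo hsupp] with x hx
  rw [hx]
  exact indicator_nonneg (fun y hy => (h.1 y hy).le) x

end Density

section MeanField

variable {n : ℕ} {Λ : ℕ → ℝ} {μ : Measure ℝ}

lemma isCooperativeField_avgField [IsProbabilityMeasure μ] [NullSingletonClass μ]
    (hΛ : IsNeighborhoodFunction Λ) (hμ : ∀ᵐ x ∂μ, x ∈ Icc (0 : ℝ) 1) :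
    IsCooperativeField (avgField Λ μ : (Fin n → ℝ) → Fin n → ℝ) where
  continuousOn := (continuous_avgField hΛ hμ).continuousOn
  monotoneOn_half_step _ hm _ hm' h := half_step_avgField_mono hΛ hμ hm.1 hm'.1 h
  sub_mem _ hm := sub_avgField_mem_orderedSimplex hΛ hμ hm

lemma IsCooperativeField.congr {h h' : (Fin n → ℝ) → Fin n → ℝ} (H : IsCooperativeField h)
    (heq : EqOn h' h (orderedSimplex n)) : IsCooperativeField h' where
  continuousOn := H.continuousOn.congr heq
  monotoneOn_half_step := H.monotoneOn_half_step.congr fun m hm => by simp only [heq hm]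
  sub_mem m hm := heq hm ▸ H.sub_mem m hm

theorem som_as_convergence_dim1_general [NeZero n] [IsProbabilityMeasure μ] [NullSingletonClass μ]
    (hΛ : IsNeighborhoodFunction Λ) (hHΛ : HLambda n Λ) (hμ : μ.support = Icc 0 1)
    {mstar : Fin n → ℝ} (hmstar : {m ∈ Fplus n | measureMeanField Λ μ m = 0} = {mstar})
    {ε : ℕ → ℝ} (hε : ∀ t, ε t ∈ Ico (0 : ℝ) 1)
    (hεdiv : Tendsto (fun T => ∑ t ∈ Finset.range T, ε t) atTop atTop)
    (hεsq : Summable fun t => ε t ^ 2) {Ω : Type*} [MeasurableSpace Ω] {P : Measure Ω}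
    {X : ℕ → Ω → ℝ} (hXmeas : ∀ t, Measurable (X t)) (hXlaw : ∀ t, P.map (X t) = μ)
    (hXindep : iIndepFun X P) :
    (∀ g : ℝ → Fin n → ℝ, g 0 ∈ Fplus n → ContinuousOn g (Ici 0) →
      (∀ t > 0, HasDerivAt g (-measureMeanField Λ μ (g t)) t) → Tendsto g atTop (𝓝 mstar)) ∧
    ∀ m0 ∈ Fplus n,
      ∀ᵐ ω ∂P, Tendsto (fun t => somProc Λ ε X m0 t ω) atTop (𝓝 mstar) := by
  have hμ01 := ae_mem_Icc_of_support_eq hμ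
  have heq : EqOn (measureMeanField Λ μ) (avgField Λ μ) (orderedSimplex n) := fun m hm =>
    measureMeanField_eq_avgField hΛ hμ01 hm.1
  have H := isCooperativeField_avgField (n := n) hΛ hμ01
  have hzero : ∀ m ∈ orderedSimplex n, avgField Λ μ m = 0 → m = mstar := fun m hm hz =>
    hmstar.subset ⟨mem_Fplus_of_avgField_eq_zero hΛ hμ hm hz hHΛ, (heq hm).trans hz⟩
  refine ⟨fun g hg0 hcont hderiv => ?_, fun m0 hm0 => ?_⟩
  · exact (H.congr heq).tendsto_of_hasDerivAt
      (fun m hm hz => hzero m hm ((heq hm).symm.trans hz)) hg0 hcont hderiv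
  · exact ae_tendsto_somProc hΛ hμ01 H hzero hε hεdiv hεsq hXmeas hXlaw hXindep hm0

end MeanField

/-- Under `H_Λ` and `H_μ`, the unique zero `m★` of the mean
field in `F_n^+` is an attracting equilibrium of the ODE `dm/dt = -h(m)`, and
for gains with `Σ ε_t = ∞`, `Σ ε_t² < ∞`, the SOM process started in `F_n^+`
converges to `m★` almost surely. -/
theorem som_as_convergence_dim1 {n : ℕ} [NeZero n] (hn : 2 ≤ n)
    (Λ : ℕ → ℝ) (hΛanti : Antitone Λ) (hΛ0 : Λ 0 = 1)
    (hΛrange : ∀ k, Λ k ∈ Set.Icc (0 : ℝ) 1) (hHΛ : HLambda n Λ)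
    (μ : Measure ℝ) [IsProbabilityMeasure μ] (f : ℝ → ℝ)
    (hdens : μ = volume.withDensity fun x => ENNReal.ofReal (f x))
    (hsupp : ∀ x, x ∉ Set.Icc (0 : ℝ) 1 → f x = 0)
    (hHμ : Hmu f)
    (mstar : Fin n → ℝ) (hmstarF : mstar ∈ Fplus n)
    (hmstarzero : meanField Λ f mstar = 0)
    (hmstaruniq : ∀ m ∈ Fplus n, meanField Λ f m = 0 → m = mstar)
    (ε : ℕ → ℝ) (hεmem : ∀ t, ε t ∈ Set.Ioo (0 : ℝ) 1)
    (hεdiv : Tendsto (fun T => ∑ t ∈ Finset.range T, ε t) atTop atTop)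
    (hεsq : Summable fun t => ε t ^ 2)
    {Ω : Type*} [MeasurableSpace Ω] (P : Measure Ω) [IsProbabilityMeasure P]
    (X : ℕ → Ω → ℝ) (hXmeas : ∀ t, Measurable (X t))
    (hXlaw : ∀ t, P.map (X t) = μ)
    (hXindep : iIndepFun X P) :
    (∃ U ∈ nhds mstar, U ⊆ Fplus n ∧
      ∀ g : ℝ → Fin n → ℝ, g 0 ∈ U →
        (∀ t : ℝ, HasDerivAt g (-(meanField Λ f (g t))) t) →
        Tendsto g atTop (nhds mstar)) ∧
    ∀ m0 ∈ Fplus n,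
      ∀ᵐ ω ∂P, Tendsto (fun t => somProc Λ ε X m0 t ω) atTop (nhds mstar) := by
  subst hdens
  have hfm := hHμ.aemeasurable hsupp
  have hfield := meanField_eq_measureMeanField (n := n) hfm (hHμ.ae_nonneg hsupp) Λ
  have hmstar : {m ∈ Fplus n | meanField Λ f m = 0} = {mstar} :=
    eq_singleton_iff_unique_mem.2 ⟨⟨hmstarF, hmstarzero⟩, fun m hm => hmstaruniq m hm.1 hm.2⟩
  simp only [hfield] at hmstar ⊢
  obtain ⟨hflow, hsom⟩ := som_as_convergence_dim1_general
    ⟨hΛanti, hΛ0, fun k => (hΛrange k).1⟩ hHΛ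
    (support_withDensity_ofReal_eq_Icc one_pos hfm hHμ.1 hsupp) hmstar
    (fun t => Ioo_subset_Ico_self (hεmem t)) hεdiv hεsq hXmeas hXlaw hXindep
  exact ⟨⟨Fplus n, isOpen_Fplus.mem_nhds hmstarF, subset_rfl, fun g hg0 hderiv =>
    hflow g hg0 (fun t _ => (hderiv t).continuousAt.continuousWithinAt) fun t _ => hderiv t⟩, hsom⟩

end
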